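/- arXiv:1809.10550 — 4 statements merged into one kernel-verified Lean document; each statement's English description precedes it below -/
import Mathlib

section
/- (Lie criterion) An element f of the free Zinbiel algebra Zin(X) is a Lie element (i.e., f ∈ ST(X)) if and only if p(f) = −f. -/
/-- Nonempty words in the alphabet `X`. -/
def Word (X : Type) : Type := {l : List X // l ≠ []}

/-- The underlying vector space of the free Zinbiel algebra on `X` over `K`:
the space with basis the nonempty words in `X`. -/
abbrev Zin (K X : Type) [Field K] : Type := Word X →₀ K

/-- All shuffles (interleavings) of two words. -/
def shuffles {X : Type} : List X → List X → List (List X)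
  | [], l => [l]
  | a :: as, [] => [a :: as]
  | a :: as, b :: bs =>
      ((shuffles as (b :: bs)).map fun w => a :: w) ++
        ((shuffles (a :: as) bs).map fun w => b :: w)
  termination_by l₁ l₂ => l₁.length + l₂.length

/-- The basis vector of `Zin K X` corresponding to a word (`0` for the empty word). -/
noncomputable def ofList {K X : Type} [Field K] : List X → Zin K X
  | [] => 0
  | a :: t => Finsupp.single ⟨a :: t, by simp⟩ 1

/-- Sum of the basis vectors of a list of words. -/
noncomputable def ofLists {K X : Type} [Field K] (ls : List (List X)) : Zin K X :=
  (ls.map (ofList (K := K))).sum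

/-- The letter `x` as an element of `Zin K X`. -/
noncomputable def ofLetter {K X : Type} [Field K] (x : X) : Zin K X :=
  Finsupp.single ⟨[x], by simp⟩ 1

/-- The Zinbiel product on `Zin K X`, defined on basis words by
`u ∘ (v ++ [y]) = (u ⧢ v) ++ [y]` and extended bilinearly. -/
noncomputable def zmul {K X : Type} [Field K] (f g : Zin K X) : Zin K X :=
  f.sum fun u cu => g.sum fun w cw =>
    (cu * cw) • ofLists ((shuffles u.1 w.1.dropLast).map fun s => s ++ [w.1.getLast w.2])

/-- The shuffle product on `Zin K X`, extended bilinearly from words. -/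
noncomputable def shMul {K X : Type} [Field K] (f g : Zin K X) : Zin K X :=
  f.sum fun u cu => g.sum fun w cw => (cu * cw) • ofLists (shuffles u.1 w.1)

/-- The commutator `[f,g] = f∘g - g∘f` in `Zin K X`. -/
noncomputable def zbracket {K X : Type} [Field K] (f g : Zin K X) : Zin K X :=
  zmul f g - zmul g f

/-- The anticommutator `{f,g} = f∘g + g∘f` in `Zin K X`. -/
noncomputable def jprod {K X : Type} [Field K] (f g : Zin K X) : Zin K X :=
  zmul f g + zmul g f

/-- Swap the last two letters of a word (identity on shorter words). -/
def swapLast {X : Type} (l : List X) : List X :=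
  match l.reverse with
  | z :: y :: t => (y :: z :: t).reverse
  | _ => l

/-- The linear map `p : Zin(X) → Zin(X)`: `p(x) = -x` on letters, and `p` swaps
the last two letters of a word of length ≥ 2. -/
noncomputable def pMap {K X : Type} [Field K] (f : Zin K X) : Zin K X :=
  f.sum fun w c =>
    c • (if w.1.length = 1 then -(Finsupp.single w (1 : K)) else ofList (swapLast w.1))

/-- `bar f = f - p(f)`. -/
noncomputable def bar {K X : Type} [Field K] (f : Zin K X) : Zin K X := f - pMap f

/-- The skew element `\bar{w} = w - p(w)` associated to a word `w`. -/
noncomputable def skew {K X : Type} [Field K] (w : Word X) : Zin K X :=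
  bar (Finsupp.single w 1)

/-- Membership in `ST(X)`, the subalgebra of `(Zin(X), [·,·])` generated by the
letters: the free special Tortkara algebra on `X`. -/
inductive InST {K X : Type} [Field K] : Zin K X → Prop
  | letter (x : X) : InST (ofLetter x)
  | zero : InST 0
  | add {f g : Zin K X} : InST f → InST g → InST (f + g)
  | smul (c : K) {f : Zin K X} : InST f → InST (c • f)
  | bracket {f g : Zin K X} : InST f → InST g → InST (zbracket f g)

/-- Membership in `J(X)`, the subalgebra of `(Zin(X), {·,·})` generated by the
letters: the Jordan elements of `Zin(X)`. -/
inductive InJ {K X : Type} [Field K] : Zin K X → Prop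
  | letter (x : X) : InJ (ofLetter x)
  | zero : InJ 0
  | add {f g : Zin K X} : InJ f → InJ g → InJ (f + g)
  | smul (c : K) {f : Zin K X} : InJ f → InJ (c • f)
  | jmul {f g : Zin K X} : InJ f → InJ g → InJ (jprod f g)

/-- The left-normed anticommutator `{{⋯{x₁,x₂}⋯},xₙ}` of the letters of a word. -/
noncomputable def dynkinWord {K X : Type} [Field K] : List X → Zin K X
  | [] => 0
  | x :: xs => xs.foldl (fun acc y => jprod acc (ofLetter y)) (ofLetter x)

/-- The Dynkin map `D : Zin(X) → Zin(X)`. -/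
noncomputable def dynkin {K X : Type} [Field K] (f : Zin K X) : Zin K X :=
  f.sum fun w c => c • dynkinWord w.1


namespace LieCrit

/-- Insert a letter everywhere (dual form). -/
def D {X K : Type} [Add K] (x : X) : (List X → K) → List X → K
  | f, [] => f [x]
  | f, c :: w => f (x :: c :: w) + D x (fun w' => f (c :: w')) w

section abs
variable {X K : Type} [Field K]

lemma D_add (x : X) (f g : List X → K) (w : List X) :
    D x (fun w => f w + g w) w = D x f w + D x g w := by
  induction w generalizing f g with
  | nil => simp [D]
  | cons c w ih => simp only [D]; rw [ih]; ring

lemma D_cons (x c : X) (f : List X → K) (w : List X) :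
    D x (fun w' => f (c :: w')) w = D x f (c :: w) - f (x :: c :: w) := by
  simp [D]

lemma D_comm (x y : X) (f : List X → K) (w : List X) :
    D x (D y f) w = D y (D x f) w := by
  induction w generalizing f with
  | nil => simp [D, add_comm]
  | cons c w ih =>
    simp only [D, D_add]
    rw [ih]
    ring

lemma cyc (k A B C : K) (hk : k + 1 ≠ 0) (h1 : B + C = k * A) (h2 : C + A = k * B)  : A = B := by
  apply mul_left_cancel₀ hk
  linear_combination h2 - h1

lemma W_zero [CharZero K] (W : X → X → X → X → X → K)
    (ha : ∀ a b x c d, W a b x c d = - W b a x c d)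
    (hc : ∀ a b x c d, W a b x c d = - W a b x d c)
    (hr : ∀ a b x c d, W a b x c d = W a b c d x)
    (hj : ∀ a b x c d, W a b x c d + W b x a c d + W x a b c d = 0) (a b x c d : X) :
    W a b x c d = 0 := by
  have E : ∀ a b x c d, W a b x c d = W x c a b d := by
    intro a b x c d
    have h1 := hj a b x c d
    have h2 := hj a b c d x
    have h3 := hj x a c d b
    have h4 := hj b x c d a
    have n1 := hr a b x c d
    have n2 := hr x a b c d
    have n3 := hr b x a c d
    have n4 : W a c x d b = W c a b d x := by rw [ha, hc, hr]; ring
    have n5 : W c x a d b = W x c a b d := by rw [ha, hc]; ring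
    have n6 : W x c b d a = W x c a b d := by rw [← hr]
    have n7 : W c b x d a = W b c a d x := by rw [ha, hc, hr]; ring
    have n8 := hr x c a b d
    apply mul_left_cancel₀ (two_ne_zero (α := K))
    grind
  have F : ∀ a b x c d, W a b x c d = W d a x c b := by
    intro a b x c d
    rw [E a b x c d, ← hr, E]
  have j := hj a b d x c
  have e1 := hr a b d x c
  have e2 : W b d a x c = W a b d x c := 
    (hr b d a x c).trans ((E b d x c a).trans ((hr x c a b d).symm.trans
      ((E a b x c d).symm.trans e1.symm)))
  have e3 : W d a b x c = W a b d x c := by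
    rw [hr a b d x c, F a b x c d, hr]
  rw [e2, e3, e1] at j
  apply mul_left_cancel₀ (three_ne_zero (α := K))
  linear_combination j

variable [CharZero K] (q : X → X → List X → K)
  (hanti : ∀ a b w, q a b w = - q b a w)
  (h2 : ∀ a b x w, D x (q a b) w = q b x (a :: w) + q x a (b :: w))

include hanti h2

lemma step1 (a b x y : X) (w : List X) : q x y (a :: b :: w) = q x y (b :: a :: w) := by
  have key : ∀ x y, D y (D x (q a b)) w =
      (q x y (b :: a :: w) + q y b (x :: a :: w) - q b x (y :: a :: w))
      + (q a y (x :: b :: w) + q y x (a :: b :: w) - q x a (y :: b :: w)) := by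
    intro x y
    have : D x (q a b) = fun w => q b x (a :: w) + q x a (b :: w) := by
      funext w; exact h2 a b x w
    rw [this, D_add, D_cons, D_cons, h2, h2]
  have h := D_comm x y (q a b) w
  rw [key, key] at h
  have h2' : (2 : K) ≠ 0 := two_ne_zero
  apply mul_left_cancel₀ h2'
  rw [hanti y x, hanti a y, hanti y b, hanti a x, hanti x b,] at h
  rw [hanti y x] at h
  linear_combination h

def SymAt (q : X → X → List X → K) (j : ℕ) : Prop :=
  ∀ (l : List X), l.length = j → ∀ a b x y w, q x y (l ++ a :: b :: w) = q x y (l ++ b :: a :: w)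

omit [CharZero K] hanti h2 in
lemma move (j : ℕ) (h : ∀ i < j, SymAt q i) (m l : List X) (x c d : X) (w : List X)
    (hl : m.length + l.length ≤ j) :
    q c d (m ++ (l ++ x :: w)) = q c d (m ++ (x :: l ++ w)) := by
  induction l generalizing m with
  | nil => rfl
  | cons e l ih =>
    have h1 := ih (m ++ [e]) (by simp at *; omega)
    have h3 := h m.length (by simp at *; omega) m rfl x e c d (l ++ w)
    simp at *
    rw [h1, h3]

omit [CharZero K] hanti h2 in
lemma D_sym (j : ℕ) (h : ∀ i < j, SymAt q i) (m l : List X) (x c d : X) (w : List X)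
    (hl : m.length + l.length ≤ j) :
    D x (fun w' => q c d (m ++ w')) (l ++ w) =
      (l.length : K) * q c d (x :: m ++ (l ++ w)) + D x (fun w' => q c d (m ++ (l ++ w'))) w := by
  induction l generalizing m with
  | nil => simp
  | cons e l ih =>
    have h1 := ih (m ++ [e]) (by simp at *; omega)
    have h3 := move q j h [] m x c d (e :: (l ++ w)) (by simp at *; omega)
    simp only [List.cons_append, D]
    simp at *
    rw [h1, h3]
    ring

lemma stepRel (j : ℕ) (h : ∀ i < j + 1, SymAt q i) (l : List X) (hl : l.length = j)
    (a b x c d : X) (w : List X) :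
    (q d x (c :: l ++ a :: b :: w) - q d x (c :: l ++ b :: a :: w))
     + (q x c (d :: l ++ a :: b :: w) - q x c (d :: l ++ b :: a :: w))
     = (j + 2) * (q c d (x :: l ++ a :: b :: w) - q c d (x :: l ++ b :: a :: w)) := by
  have key : ∀ a b, D x (q c d) (l ++ a :: b :: w) =
      (j + 2) * q c d (x :: l ++ a :: b :: w) +
        D x (fun w' => q c d (l ++ a :: b :: w')) w := by
    intro a b
    have h1 := D_sym q (j+1) h [] l x c d (a :: b :: w) (by simp; omega)
    have h3 := move q (j+1) h [] l x c d (a :: b :: w) (by simp; omega)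
    have h4 := move q (j+1) h [] (l ++ [a]) x c d (b :: w) (by simp; omega)
    simp [D] at *
    rw [h1, h3, h4, hl]
    ring
  have e1 := key a b
  have e2 := key b a
  have e3 : (fun w' => q c d (l ++ a :: b :: w')) = (fun w' => q c d (l ++ b :: a :: w')) := by
    funext w'; exact h j (by omega) l hl a b c d w'
  rw [e3] at e1
  rw [h2] at e1 e2
  simp only [List.cons_append] at *
  linear_combination e1 - e2

lemma sym1 : SymAt q 1 := by
  intro l hl a b x c w
  obtain ⟨z, rfl⟩ := List.length_eq_one_iff.mp hl
  have s1 := step1 q hanti h2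
  have h0 : ∀ i < 0 + 1, SymAt q i := by
    intro i hi l hl a b x y w
    have : l = [] := by apply List.eq_nil_of_length_eq_zero; omega
    subst this
    exact s1 a b x y w
  have rel := stepRel q hanti h2 0 h0 [] rfl
  have := W_zero (fun a b x c d => q c d (x :: a :: b :: w) - q c d (x :: b :: a :: w))
    (by intros; ring)
    (by intro a b x c d; rw [hanti d c, hanti d c]; ring)
    (by
      intro a b x c d
      have r1 := rel a b x c d w
      have r2 := rel a b c d x w
      have h3 : (3 : K) ≠ 0 := three_ne_zero
      apply mul_left_cancel₀ h3
      simp only [List.cons_append, List.nil_append] at *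
      push_cast at *
      linear_combination r2 - r1)
    (by
      intro a b x c d
      rw [s1 x a, s1 x b c d, s1 a b c d]
      ring) a b z x c
  simpa [sub_eq_zero] using this

lemma symAll (j : ℕ) : SymAt q j := by
  induction j using Nat.strong_induction_on with
  | _ j ih =>
    match j, ih with
    | 0, _ =>
      intro l hl a b x y w
      have : l = [] := List.eq_nil_of_length_eq_zero hl
      subst this
      exact step1 q hanti h2 a b x y w
    | 1, _ => exact sym1 q hanti h2
    | j + 2, ih =>
      intro l hl a b c d w
      obtain ⟨x, l, rfl⟩ := List.exists_cons_of_length_eq_add_one hl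
      have hl : l.length = j + 1 := by simpa using hl
      have rel := stepRel q hanti h2 (j+1) ih l hl a b
      have r1 := rel x c d w
      have r2 := rel c d x w
      have r3 := rel d x c w
      have h3 : (((j + 4 : ℕ) : K)) * ((j + 1 : ℕ) : K) ≠ 0 :=
        mul_ne_zero (Nat.cast_ne_zero.mpr (by omega)) (Nat.cast_ne_zero.mpr (by omega))
      apply mul_left_cancel₀ h3
      push_cast at *
      simp only [List.cons_append] at *
      linear_combination (-(j:K) - 2) * r1 - r2 - r3

lemma final (a b : X) (w : List X) (hw : w ≠ []) : q a b w = 0 := by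
  have hs := symAll q hanti h2
  obtain ⟨x, w, rfl⟩ := List.exists_cons_of_ne_nil hw
  have rel : ∀ w a b x, q b x (a :: w) + q x a (b :: w) = (w.length + 1) * q a b (x :: w) := by
    intro w a b x
    have h1 := D_sym q w.length (fun i _ => hs i) [] w x a b [] (by simp)
    have h3 := move q w.length (fun i _ => hs i) [] w x a b [] (by simp)
    have h4 := h2 a b x w
    simp [D] at *
    rw [← h4, h1, h3]; ring
  have r1 := rel w a b x
  have hc : ∀ w a b x, q a b (x :: w) = q b x (a :: w) := by
    intro w a b x
    have r1 := rel w a b x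
    have r2 := rel w b x a
    have h3 : (((w.length + 2 : ℕ) : K)) ≠ 0 := Nat.cast_ne_zero.mpr (by omega)
    apply mul_left_cancel₀ h3
    push_cast
    linear_combination r2 - r1
  have e : ((w.length : K) - 1) * q a b (x :: w) = 0 := by
    rw [hc w x a b, ← hc w a b x] at r1
    linear_combination - r1
  rcases mul_eq_zero.mp e with e | e
  · have : w.length = 1 := by
      have : (w.length : K) = ((1 : ℕ) : K) := by push_cast; linear_combination e
      exact_mod_cast this
    obtain ⟨y, rfl⟩ := List.length_eq_one_iff.mp this
    have s : ∀ a b x y, q a b [x, y] = q a b [y, x] := fun a b x y => hs 0 [] rfl x y a b []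
    have t : ∀ a b x y, q a b [x, y] = - q x b [a, y] := by
      intro a b x y
      rw [hc, hanti]
    have u1 : q a b [x, y] = - q y b [x, a] := by rw [s, t, s]
    have u2 : q a b [x, y] = q y b [x, a] := by rw [t, s, t, neg_neg]
    apply mul_left_cancel₀ (two_ne_zero (α := K))
    linear_combination u1 + u2
  · exact e

end abs
end LieCrit

namespace LieCrit
section conc
variable {X K : Type} [Field K]

/-- Sum of a function over the shuffles. -/
def sF {X M : Type} [AddCommMonoid M] (u v : List X) (F : List X → M) : M :=
  ((shuffles u v).map F).sum

section
variable {M : Type} [AddCommMonoid M]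

lemma sF_nil_left (v : List X) (F : List X → M) : sF [] v F = F v := by
  simp [sF, shuffles]

lemma sF_nil_right (v : List X) (F : List X → M) : sF v [] F = F v := by
  cases v <;> simp [sF, shuffles]

lemma sF_cons (a b : X) (u v : List X) (F : List X → M) :
    sF (a :: u) (b :: v) F = sF u (b :: v) (fun s => F (a :: s)) +
      sF (a :: u) v (fun s => F (b :: s)) := by
  simp [sF, shuffles, Function.comp_def]

lemma sF_comm (u v : List X) (F : List X → M) : sF u v F = sF v u F := by
  induction u generalizing v F with
  | nil => rw [sF_nil_left, sF_nil_right]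
  | cons a u ih =>
    induction v generalizing F with
    | nil => rw [sF_nil_left, sF_nil_right]
    | cons b v ih2 =>
      rw [sF_cons, sF_cons, ih, ih2, add_comm]

lemma sF_end (a b : X) (u v : List X) (F : List X → M) :
    sF (u ++ [a]) (v ++ [b]) F = sF u (v ++ [b]) (fun s => F (s ++ [a])) +
      sF (u ++ [a]) v (fun s => F (s ++ [b])) := by
  induction u generalizing v F with
  | nil =>
    induction v generalizing F with
    | nil => simp [sF_nil_left, sF_nil_right, sF_cons, add_comm]
    | cons c v ih =>
      have := ih (fun s => F (c :: s))
      simp only [List.nil_append, List.cons_append] at *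
      rw [sF_cons, sF_cons, this]
      simp only [sF_nil_left, List.cons_append]
      abel
  | cons d u ihu =>
    induction v generalizing F with
    | nil =>
      have := ihu [] (fun s => F (d :: s))
      simp only [List.nil_append, List.cons_append] at *
      rw [sF_cons, sF_cons, this]
      simp only [sF_nil_right, List.cons_append]
      abel
    | cons c v ih =>
      have h1 := ih (fun s => F (c :: s))
      have h2 := ihu (c :: v) (fun s => F (d :: s))
      simp only [List.cons_append] at *
      rw [sF_cons, sF_cons, sF_cons, h1, h2]
      simp only [List.cons_append]
      abel

lemma sF_end_right (a b : X) (v : List X) (F : List X → M) :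
    sF [a] (v ++ [b]) F = F (v ++ [b] ++ [a]) + sF [a] v (fun s => F (s ++ [b])) := by
  have := sF_end a b [] v F
  simpa [sF_nil_left] using this
end

lemma sF_sub {M : Type} [AddCommGroup M] (u v : List X) (F G : List X → M) :
    sF u v (fun s => F s - G s) = sF u v F - sF u v G := by
  simp only [sF]
  induction shuffles u v with
  | nil => simp
  | cons a l ih => simp [ih]; abel

lemma sF_map {M N : Type} [AddCommGroup M] [AddCommGroup N] (φ : M →+ N) (u v : List X)
    (F : List X → M) : φ (sF u v F) = sF u v (fun s => φ (F s)) := by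
  simp [sF, map_list_sum, Function.comp_def]

lemma sF_D (x : X) (u : List X) (f : List X → K) :
    sF [x] u.reverse (fun s => f s.reverse) = D x f u := by
  induction u generalizing f with
  | nil => simp [sF_nil_right, D]
  | cons c u ih =>
    have := ih (fun s => f (c :: s))
    simp only [List.reverse_cons, sF_end_right, D, ← this]
    simp

lemma sF_mem {M : Type} [AddCommGroup M] [Module K M] (S : Submodule K M) (u v : List X)
    (F : List X → M) (h : ∀ s, F s ∈ S) : sF u v F ∈ S := by
  apply S.toAddSubmonoid.list_sum_mem
  intro x hx
  obtain ⟨s, _, rfl⟩ := List.mem_map.mp hx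
  exact h s

/-- zmul as a bilinear map -/
noncomputable def zm (K X : Type) [Field K] : Zin K X →ₗ[K] Zin K X →ₗ[K] Zin K X :=
  LinearMap.mk₂ K zmul
    (by
      intro f f' g
      exact Finsupp.sum_add_index' (by simp) (by
        intro a b c; rw [← Finsupp.sum_add]; simp only [add_mul, add_smul]))
    (by
      intro c f g
      unfold zmul
      rw [Finsupp.sum_smul_index (by simp), Finsupp.smul_sum]
      simp only [Finsupp.smul_sum, smul_smul, mul_assoc])
    (by
      intro f g g'
      unfold zmul
      rw [← Finsupp.sum_add]
      congr 1
      funext u cu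
      exact Finsupp.sum_add_index' (by simp) (by
        intro a b c; simp only [mul_add, add_smul]))
    (by
      intro c f g
      unfold zmul
      rw [Finsupp.smul_sum]
      congr 1
      funext u cu
      rw [Finsupp.sum_smul_index (by simp), Finsupp.smul_sum]
      simp only [smul_smul, mul_left_comm])

noncomputable def zb (K X : Type) [Field K] : Zin K X →ₗ[K] Zin K X →ₗ[K] Zin K X :=
  LinearMap.mk₂ K (fun f g => zm K X f g - zm K X g f)
    (by intro f f' g; simp only [map_add, LinearMap.add_apply]; abel)
    (by intro c f g; simp only [map_smul, LinearMap.smul_apply, smul_sub])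
    (by intro f g g'; simp only [map_add, LinearMap.add_apply]; abel)
    (by intro c f g; simp only [map_smul, LinearMap.smul_apply, smul_sub])

lemma zb_def (f g : Zin K X) : zb K X f g = zm K X f g - zm K X g f := rfl

lemma zb_apply (f g : Zin K X) : zb K X f g = zbracket f g := rfl

noncomputable def pM (K X : Type) [Field K] : Zin K X →ₗ[K] Zin K X :=
  Finsupp.lsum (M := K) K fun w => LinearMap.toSpanSingleton K _
    (if w.1.length = 1 then -(Finsupp.single w (1 : K)) else ofList (swapLast w.1))

lemma pM_apply (f : Zin K X) : pM K X f = pMap f := by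
  rfl

def mkW (w : List X) (h : w ≠ []) : Word X := ⟨w, h⟩

lemma mkW_val (w : List X) (h : w ≠ []) : (mkW w h).1 = w := rfl

lemma ofList_eq (w : List X) (h : w ≠ []) : (ofList w : Zin K X) = Finsupp.single (mkW w h) 1 := by
  cases w with
  | nil => exact absurd rfl h
  | cons a t => rfl

lemma ofLetter_eq (x : X) : (ofLetter x : Zin K X) = ofList [x] := rfl

lemma zm_words (u w : List X) (y : X) (hu : u ≠ []) :
    zm K X (ofList u) (ofList (w ++ [y])) = sF u w (fun s => ofList (s ++ [y])) := by
  rw [ofList_eq u hu, ofList_eq (w ++ [y]) (by simp)]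
  show zmul _ _ = _
  unfold zmul
  rw [Finsupp.sum_single_index (by simp), Finsupp.sum_single_index (by simp)]
  simp [ofLists, sF, Function.comp_def, mkW_val]

lemma pM_letter (x : X) : pM K X (ofList [x]) = - ofList [x] := by
  rw [ofList_eq _ (by simp), pM_apply]
  unfold pMap
  rw [Finsupp.sum_single_index (by simp)]
  simp [mkW_val]

lemma pM_word (u : List X) (a b : X) : pM K X (ofList (u ++ [a, b])) = ofList (u ++ [b, a]) := by
  rw [ofList_eq _ (by simp), pM_apply]
  unfold pMap
  rw [Finsupp.sum_single_index (by simp)]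
  simp [swapLast, mkW_val]

noncomputable def br (K : Type) {X : Type} [Field K] (a b : X) (u : List X) : Zin K X :=
  ofList (u ++ [a, b]) - ofList (u ++ [b, a])

/-- generators -/
def G (K X : Type) [Field K] : Set (Zin K X) :=
  {f | (∃ x, f = ofList [x]) ∨ ∃ a b u, f = br K a b u}

lemma pM_G (f : Zin K X) (h : f ∈ Submodule.span K (G K X)) : pM K X f = - f := by
  induction h using Submodule.span_induction with
  | mem f hf =>
    rcases hf with ⟨x, rfl⟩ | ⟨a, b, u, rfl⟩
    · exact pM_letter x
    · simp [br, pM_word]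
  | zero => simp
  | add f g _ _ hf hg => rw [map_add, hf, hg]; abel
  | smul c f _ hf => rw [map_smul, hf, smul_neg]

lemma bar_mem (f : Zin K X) : f - pM K X f ∈ Submodule.span K (G K X) := by
  induction f using Finsupp.induction_linear with
  | zero => simp
  | add f g hf hg =>
    have := add_mem hf hg
    rw [map_add]
    convert this using 1
    abel
  | single w c =>
    have : (Finsupp.single w c : Zin K X) = c • ofList w.1 := by
      rw [ofList_eq _ w.2, Finsupp.smul_single, smul_eq_mul, mul_one]; rfl
    rw [this, map_smul, ← smul_sub]
    apply Submodule.smul_mem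
    obtain ⟨w, hw⟩ := w
    show ofList w - pM K X (ofList w) ∈ _
    clear this
    rcases List.eq_nil_or_concat w with rfl | ⟨v, b, rfl⟩
    · exact absurd rfl hw
    rcases List.eq_nil_or_concat v with rfl | ⟨u, a, rfl⟩
    · rw [List.concat_eq_append, List.nil_append, pM_letter, sub_neg_eq_add]
      exact add_mem (Submodule.subset_span (Or.inl ⟨b, rfl⟩))
        (Submodule.subset_span (Or.inl ⟨b, rfl⟩))
    · rw [List.concat_eq_append, List.concat_eq_append, List.append_assoc]
      simp only [List.cons_append, List.nil_append]
      rw [pM_word]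
      exact Submodule.subset_span (Or.inr ⟨a, b, u, rfl⟩)

lemma mem_span_iff [CharZero K] (f : Zin K X) :
    f ∈ Submodule.span K (G K X) ↔ pM K X f = - f := by
  refine ⟨pM_G f, fun h => ?_⟩
  have h1 := bar_mem f
  rw [h, sub_neg_eq_add, ← two_smul K] at h1
  exact (Submodule.smul_mem_iff _ (two_ne_zero (α := K))).mp h1

lemma zm_br_letter (a b x : X) (u : List X) :
    zm K X (br K a b u) (ofList [x]) = ofList (u ++ [a, b, x]) - ofList (u ++ [b, a, x]) := by
  have h1 := zm_words (K := K) (u ++ [a, b]) [] x (by simp)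
  have h2 := zm_words (K := K) (u ++ [b, a]) [] x (by simp)
  simp only [List.nil_append, sF_nil_right] at h1 h2
  simp [br, map_sub, h1, h2]

lemma zm_br (f : List X) (hf : f ≠ []) (a b : X) (u : List X) :
    zm K X (ofList f) (br K a b u) = sF f (u ++ [a]) (fun s => ofList (s ++ [b]))
      - sF f (u ++ [b]) (fun s => ofList (s ++ [a])) := by
  have h1 := zm_words (K := K) f (u ++ [a]) b hf
  have h2 := zm_words (K := K) f (u ++ [b]) a hf
  simp only [List.append_assoc, List.cons_append, List.nil_append] at h1 h2
  rw [br, map_sub, h1, h2]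

lemma zb_letter (x y : X) : zb K X (ofList [x]) (ofList [y]) = br K x y [] := by
  have h1 := zm_words (K := K) [x] [] y (by simp)
  have h2 := zm_words (K := K) [y] [] x (by simp)
  simp only [List.nil_append, sF_nil_right] at h1 h2
  simp [zb_def, h1, h2, br]

lemma zb_br_letter (a b x : X) (u : List X) :
    zb K X (br K a b u) (ofList [x]) =
      br K b x (u ++ [a]) - br K a x (u ++ [b]) - sF [x] u (br K a b) := by
  simp only [zb_def, zm_br_letter,
    zm_br _ (List.cons_ne_nil _ _)]
  have : sF [x] u (br K a b) = sF [x] u (fun s => ofList (s ++ [a, b])) -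
     sF [x] u (fun s => ofList (s ++ [b, a])) := sF_sub _ _ _ _
  rw [this, sF_end_right, sF_end_right]
  simp [br]
  abel

lemma zm_br_br (a b c d : X) (u v : List X) :
    zm K X (br K a b u) (br K c d v) =
      sF (u ++ [a]) (v ++ [c]) (fun s => ofList (s ++ [b, d]))
      - sF (u ++ [b]) (v ++ [c]) (fun s => ofList (s ++ [a, d]))
      - sF (u ++ [a]) (v ++ [d]) (fun s => ofList (s ++ [b, c]))
      + sF (u ++ [b]) (v ++ [d]) (fun s => ofList (s ++ [a, c]))
      + sF (u ++ [a, b]) v (br K c d) - sF (u ++ [b, a]) v (br K c d) := by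
  have e1 : ∀ w : List X, sF w v (br K c d) = sF w v (fun s => ofList (s ++ [c, d])) -
     sF w v (fun s => ofList (s ++ [d, c])) := fun w => sF_sub _ _ _ _
  have e2 : ∀ a b, u ++ [a, b] = (u ++ [a]) ++ [b] := by simp
  have e3 : br K a b u = ofList (u ++ [a, b]) - ofList (u ++ [b, a]) := rfl
  rw [e3, map_sub, LinearMap.sub_apply, zm_br _ (by simp), zm_br _ (by simp), e1, e1, e2, e2]
  rw [sF_end b d (u ++ [a]), sF_end b c (u ++ [a]), sF_end a d (u ++ [b]), sF_end a c (u ++ [b])]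
  simp only [List.append_assoc, List.cons_append, List.nil_append]
  abel

lemma br_mem (a b : X) (u : List X) : br K a b u ∈ Submodule.span K (G K X) :=
  Submodule.subset_span (Or.inr ⟨a, b, u, rfl⟩)

lemma zb_br_br_mem (a b c d : X) (u v : List X) :
    zb K X (br K a b u) (br K c d v) ∈ Submodule.span K (G K X) := by
  have hb : ∀ u v a b, sF u v (br K a b) ∈ Submodule.span K (G K X) :=
    fun u v a b => sF_mem _ _ _ _ (fun s => br_mem a b s)
  have e : zb K X (br K a b u) (br K c d v) =
      sF (u ++ [a]) (v ++ [c]) (br K b d) - sF (u ++ [b]) (v ++ [c]) (br K a d)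
      - sF (u ++ [a]) (v ++ [d]) (br K b c) + sF (u ++ [b]) (v ++ [d]) (br K a c)
      + sF (u ++ [a, b]) v (br K c d) - sF (u ++ [b, a]) v (br K c d)
      - sF (v ++ [c, d]) u (br K a b) + sF (v ++ [d, c]) u (br K a b) := by
    have e1 : ∀ (w v : List X) c d, sF w v (br K c d) = sF w v (fun s => ofList (s ++ [c, d])) -
      sF w v (fun s => ofList (s ++ [d, c])) := fun w v c d => sF_sub _ _ _ _
    simp only [zb_def, zm_br_br]
    rw [sF_comm (v ++ [c]) (u ++ [a]), sF_comm (v ++ [c]) (u ++ [b]),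
      sF_comm (v ++ [d]) (u ++ [a]), sF_comm (v ++ [d]) (u ++ [b]),
      e1 (u ++ [a]) (v ++ [c]), e1 (u ++ [b]) (v ++ [c]), e1 (u ++ [a]) (v ++ [d]),
      e1 (u ++ [b]) (v ++ [d])]
    abel
  rw [e]
  exact add_mem (sub_mem (sub_mem (add_mem (add_mem (sub_mem (sub_mem (hb _ _ _ _) (hb _ _ _ _))
    (hb _ _ _ _)) (hb _ _ _ _)) (hb _ _ _ _)) (hb _ _ _ _)) (hb _ _ _ _)) (hb _ _ _ _)

lemma zb_anti (f g : Zin K X) : zb K X f g = - zb K X g f := by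
  simp [zb_def]

lemma zb_mem (f g : Zin K X) (hf : f ∈ Submodule.span K (G K X))
    (hg : g ∈ Submodule.span K (G K X)) : zb K X f g ∈ Submodule.span K (G K X) := by
  have hl : ∀ a b x u, zb K X (br K a b u) (ofList [x]) ∈ Submodule.span K (G K X) := by
    intro a b x u
    rw [zb_br_letter]
    exact sub_mem (sub_mem (br_mem _ _ _) (br_mem _ _ _)) (sF_mem _ _ _ _ (fun s => br_mem a b s))
  induction hf, hg using Submodule.span_induction₂ with
  | mem_mem f g hf hg =>
    rcases hf with ⟨x, rfl⟩ | ⟨a, b, u, rfl⟩ <;> rcases hg with ⟨y, rfl⟩ | ⟨c, d, v, rfl⟩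
    · rw [zb_letter]; exact br_mem _ _ _
    · rw [zb_anti]; exact neg_mem (hl _ _ _ _)
    · exact hl _ _ _ _
    · exact zb_br_br_mem _ _ _ _ _ _
  | zero_left => simp
  | zero_right => simp
  | add_left f g h _ _ _ h1 h2 => rw [map_add]; exact add_mem h1 h2
  | add_right f g h _ _ _ h1 h2 => rw [map_add]; exact add_mem h1 h2
  | smul_left c f g _ _ h => rw [map_smul]; exact Submodule.smul_mem _ _ h
  | smul_right c f g _ _ h => rw [map_smul]; exact Submodule.smul_mem _ _ h

lemma forward (f : Zin K X) (h : InST f) : f ∈ Submodule.span K (G K X) := by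
  induction h with
  | letter x => exact Submodule.subset_span (Or.inl ⟨x, rfl⟩)
  | zero => exact zero_mem _
  | add _ _ h1 h2 => exact add_mem h1 h2
  | smul c _ h => exact Submodule.smul_mem _ _ h
  | bracket _ _ h1 h2 => exact zb_mem _ _ h1 h2

/-- ST as a submodule -/
def ST (K X : Type) [Field K] : Submodule K (Zin K X) where
  carrier := {f | InST f}
  add_mem' := InST.add
  zero_mem' := InST.zero
  smul_mem' c _ h := InST.smul c h

lemma D_zero (x : X) (w : List X) (f : List X → K) (h : ∀ s, s.length = w.length + 1 → f s = 0) :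
    D x f w = 0 := by
  induction w generalizing f with
  | nil => exact h _ rfl
  | cons c w ih =>
    rw [D, h _ (by simp), ih _ (fun s hs => h _ (by simp [hs])), add_zero]

lemma D_congr (x : X) (w : List X) (f g : List X → K)
    (h : ∀ s, s.length = w.length + 1 → f s = g s) :
    D x f w = D x g w := by
  induction w generalizing f g with
  | nil => exact h _ rfl
  | cons c w ih =>
    rw [D, D, h _ (by simp), ih _ _ (fun s hs => h _ (by simp [hs]))]

lemma br_ST [CharZero K] (n : ℕ) : ∀ (u : List X), u.length = n → ∀ a b, br K a b u ∈ ST K X := by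
  have hlet : ∀ x, ofList [x] ∈ ST K X := fun x => InST.letter x
  induction n with
  | zero =>
    intro u hu a b
    have : u = [] := List.eq_nil_of_length_eq_zero hu
    subst this
    rw [← zb_letter]
    exact InST.bracket (hlet a) (hlet b)
  | succ n ih =>
    intro u hu a b
    by_contra hne
    obtain ⟨φ, h1, h2⟩ := Submodule.exists_le_ker_of_notMem hne
    let q : X → X → List X → K := fun a b w => if w.length = n + 1 then φ (br K a b w.reverse) else 0
    have hq := final q (by
      intro a b w
      simp only [q]
      split_ifs
      · rw [← map_neg]; simp [br]
      · simp) (by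
      intro a b x w
      by_cases hw : w.length = n
      · have hm : zb K X (br K a b w.reverse) (ofList [x]) ∈ ST K X :=
          InST.bracket (ih w.reverse (by simp [hw]) a b) (hlet x)
        have h0 : φ (zb K X (br K a b w.reverse) (ofList [x])) = 0 := h2 hm
        rw [zb_br_letter, map_sub, map_sub] at h0
        have e1 : D x (q a b) w = φ (sF [x] w.reverse (br K a b)) := by
          have := sF_D x w (fun s => φ (br K a b s.reverse))
          simp only [List.reverse_reverse] at this
          have e2 := sF_map (φ : Zin K X →ₗ[K] K).toAddMonoidHom [x] w.reverse (br K a b)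
          simp only [LinearMap.toAddMonoidHom_coe] at e2
          rw [e2, this]
          apply D_congr
          intro s hs
          simp [q, hs, hw]
        have e3 : ∀ w, br K x a w = - br K a x w := by intro w; simp [br]
        rw [e1]
        simp only [q, List.length_cons, hw, if_true, List.reverse_cons, e3, map_neg]
        linear_combination - h0
      · rw [D_zero]
        · simp [q, hw]
        · intro s hs
          simp [q, hs, hw]) a b u.reverse (by intro h; simp at h; simp [h] at hu)
    simp [q, hu] at hq
    exact h1 hq

end conc
end LieCrit

/-- Lie criterion: an element `f` of the free Zinbiel algebra `Zin(X)` is a Lie element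
(i.e. `f ∈ ST(X)`) if and only if `p(f) = -f`. -/
theorem lie_criterion (K X : Type) [Field K] [CharZero K] (f : Zin K X) :
    InST f ↔ pMap f = -f := by
  rw [← LieCrit.pM_apply, ← LieCrit.mem_span_iff]
  refine ⟨LieCrit.forward f, fun h => ?_⟩
  have : Submodule.span K (LieCrit.G K X) ≤ LieCrit.ST K X := by
    rw [Submodule.span_le]
    rintro _ (⟨x, rfl⟩ | ⟨a, b, u, rfl⟩)
    · exact InST.letter x
    · exact LieCrit.br_ST _ u rfl a b
  exact this h
end

section
/- Let X = {x_1,…,x_q} and let ST(X)_{m_1,…,m_q} be the multihomogeneous component of ST(X) spanned by the elements of ST(X) that are linear combinations of words containing each x_i exactly m_i times, with n = m_1 + ⋯ + m_q ≥ 2. Then dim ST(X)_{m_1,…,m_q} = Σ_{i<j} ((n−2)!/(m_1!⋯m_q!)) m_i m_j. In particular, the multilinear part (all m_i = 1, n = q) has dimension q!/2. -/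
namespace STP

theorem abstract_inj {K V X : Type} [Field K] [CharZero K] [AddCommGroup V] [Module K V]
    [Fintype X] [DecidableEq X] (D M : X → V →ₗ[K] V)
    (hDM : ∀ y x G, D y (M x G) = (if x = y then G else 0) + M x (D y G))
    (hMM : ∀ x y G, M x (M y G) = M y (M x G))
    (hW : ∀ e : X → V, ∑ z, M z (D z (∑ x, M x (e x))) = 0 → ∑ x, M x (e x) = 0)
    (F : V) (hF : ∑ x, M x (D x F) = (2 : K) • F)
    (hs : ∀ t y z, D t (D y (D z F)) = - D y (D t (D z F))) :
    ∀ t y z, D t (D y (D z F)) = 0 := by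
  have two0 : ∀ v : V, v = -v → v = 0 := by
    intro v hv
    have h2 : (2 : K) • v = 0 := by
      rw [two_smul]; nth_rewrite 1 [hv]; simp
    exact (smul_eq_zero.mp h2).resolve_left two_ne_zero
  have hDS : ∀ (y : X) (e : X → V), D y (∑ x, M x (e x)) = e y + ∑ x, M x (D y (e x)) := by
    intro y e
    rw [map_sum]
    simp only [hDM]
    rw [Finset.sum_add_distrib]
    simp
  have h1 : ∀ z, ∑ x, M x (D z (D x F)) = D z F := by
    intro z
    have := congrArg (D z) hF
    rw [hDS, map_smul, two_smul] at this
    exact add_left_cancel this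
  let E : X → X → V := fun y z => D y (D z F) - D z (D y F)
  have h2 : ∀ y z, E y z = ∑ x, M x (D y (D z (D x F))) := by
    intro y z
    have := congrArg (D y) (h1 z)
    rw [hDS] at this
    simp only [E]
    rw [← this]; abel
  let C : X → V := fun y => ∑ z, M z (E y z)
  have hC : ∀ y, C y = D y F - ∑ z, M z (D z (D y F)) := by
    intro y
    simp only [C, E, map_sub, Finset.sum_sub_distrib]
    rw [h1]
  have h3 : ∀ t y, D t (C y) = - ∑ x, M x (D t (D x (D y F))) := by
    intro t y
    rw [hC, map_sub, hDS]; abel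
  have h4 : ∑ z, M z (C z) = 0 := by
    apply two0
    simp only [C, map_sum]
    conv_rhs => rw [Finset.sum_comm]
    rw [← Finset.sum_neg_distrib]
    refine Finset.sum_congr rfl fun x _ => ?_
    rw [← Finset.sum_neg_distrib]
    refine Finset.sum_congr rfl fun y _ => ?_
    rw [hMM, ← map_neg, ← map_neg]
    simp only [E, neg_sub]
  have h5 : ∀ y z, ∑ t, M t (D t (E y z)) = D y (C z) - D z (C y) := by
    intro y z
    rw [h3, h3]
    simp only [E, map_sub, Finset.sum_sub_distrib]
    have : ∀ y z, ∑ x, M x (D y (D x (D z F))) = - ∑ x, M x (D x (D y (D z F))) := by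
      intro y z
      rw [← Finset.sum_neg_distrib]
      refine Finset.sum_congr rfl fun x _ => ?_
      rw [hs, map_neg]
    rw [this, this]; abel
  have h6 : ∀ y, ∑ t, M t (D t (C y)) = 0 := by
    intro y
    apply two0
    have e1 : ∑ t, M t (D t (C y)) = C y + ∑ z, M z (∑ t, M t (D t (E y z))) := by
      have : ∀ t, D t (C y) = E y t + ∑ z, M z (D t (E y z)) := fun t => hDS t _
      simp only [this, map_add, Finset.sum_add_distrib, map_sum]
      congr 1
      rw [Finset.sum_comm]
      refine Finset.sum_congr rfl fun x _ => Finset.sum_congr rfl fun z _ => ?_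
      rw [hMM]
    have e2 : C y + ∑ z, M z (D y (C z)) = 0 := by
      rw [← hDS, h4, map_zero]
    simp only [h5, map_sub, Finset.sum_sub_distrib] at e1
    conv_lhs => rw [e1]
    rw [← add_sub_assoc, e2, zero_sub]
  have hC0 : ∀ y, C y = 0 := fun y => hW _ (h6 y)
  have hE0 : ∀ y z, E y z = 0 := by
    intro y z
    have h := h5 y z
    rw [hC0, hC0, map_zero, map_zero, sub_zero] at h
    rw [h2] at h ⊢
    exact hW _ h
  have ha : ∀ t y z, D t (D y (D z F)) = D t (D z (D y F)) := by
    intro t y z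
    rw [sub_eq_zero.mp (hE0 y z)]
  intro t y z
  apply two0
  calc D t (D y (D z F)) = D t (D z (D y F)) := ha _ _ _
    _ = - D z (D t (D y F)) := hs _ _ _
    _ = - D z (D y (D t F)) := by rw [ha]
    _ = D y (D z (D t F)) := by rw [hs z y t, neg_neg]
    _ = D y (D t (D z F)) := ha _ _ _
    _ = - D t (D y (D z F)) := hs _ _ _

variable {K X : Type} [Field K]

/-- right derivative -/
def Dr (y : X) : (List X → K) →ₗ[K] (List X → K) where
  toFun F := fun w => F (w ++ [y])
  map_add' _ _ := rfl
  map_smul' _ _ := rfl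

@[simp] theorem Dr_apply (y : X) (F : List X → K) (w) : Dr y F w = F (w ++ [y]) := rfl

/-- shuffle evaluated at a word -/
def shf : List X → (List X → K) → (List X → K) → K
  | [], F, G => F [] * G []
  | a :: w, F, G => shf w (fun l => F (a :: l)) G + shf w F (fun l => G (a :: l))

theorem shf_comm (w : List X) (F G : List X → K) : shf w F G = shf w G F := by
  induction w generalizing F G with
  | nil => simp [shf, mul_comm]
  | cons a w ih => simp only [shf]; rw [ih, ih F]; ring

theorem shf_add_right (w : List X) (F G H : List X → K) :
    shf w F (G + H) = shf w F G + shf w F H := by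
  induction w generalizing F G H with
  | nil => simp [shf, mul_add]
  | cons a w ih =>
    simp only [shf]
    have := ih F (fun l => G (a :: l)) (fun l => H (a :: l))
    rw [ih]
    have e : (fun l => (G + H) (a :: l)) = (fun l => G (a :: l)) + (fun l => H (a :: l)) := rfl
    rw [e, this]; ring

theorem shf_smul_right (w : List X) (c : K) (F G : List X → K) :
    shf w F (c • G) = c * shf w F G := by
  induction w generalizing F G with
  | nil => simp [shf]; ring
  | cons a w ih =>
    simp only [shf]
    have := ih F (fun l => G (a :: l))
    have e : (fun l => (c • G) (a :: l)) = c • (fun l => G (a :: l)) := rfl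
    rw [ih, e, this]; ring

theorem shf_snoc (w : List X) (y : X) (F G : List X → K) :
    shf (w ++ [y]) F G = shf w (Dr y F) G + shf w F (Dr y G) := by
  induction w generalizing F G with
  | nil => simp [shf]
  | cons a w ih =>
    simp only [List.cons_append, shf]
    rw [ih, ih]
    have e : ∀ F : List X → K, (fun l => (Dr y F) (a :: l)) = Dr y (fun l => F (a :: l)) :=
      fun F => rfl
    rw [e, e]; ring

/-- shuffle product -/
def sh : (List X → K) →ₗ[K] (List X → K) →ₗ[K] (List X → K) :=
  LinearMap.mk₂ K (fun F G w => shf w F G)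
    (by intro F G H; ext w; simp only [Pi.add_apply]
        rw [shf_comm, shf_add_right, shf_comm, shf_comm w H])
    (by intro c F G; ext w; simp only [Pi.smul_apply, smul_eq_mul]
        rw [shf_comm, shf_smul_right, shf_comm])
    (by intro F G H; ext w; exact shf_add_right _ _ _ _)
    (by intro c F G; ext w; exact shf_smul_right _ _ _ _)

theorem sh_apply (F G : List X → K) (w) : sh F G w = shf w F G := rfl

theorem sh_comm (F G : List X → K) : sh F G = sh G F := by
  ext w; exact shf_comm _ _ _

theorem Dr_sh (y : X) (F G : List X → K) : Dr y (sh F G) = sh (Dr y F) G + sh F (Dr y G) := by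
  ext w; exact shf_snoc _ _ _ _

theorem ext_Dr {F G : List X → K} (h0 : F [] = G []) (h : ∀ y, Dr y F = Dr y G) : F = G := by
  ext w
  rcases List.eq_nil_or_concat w with rfl | ⟨w, y, rfl⟩
  · exact h0
  · simpa using congrFun (h y) w

variable [DecidableEq X]

/-- delta function -/
def dl (u : List X) : List X → K := fun l => if l = u then 1 else 0

theorem sh_one (G : List X → K) : sh (dl []) G = G := by
  ext w
  rw [sh_apply]
  induction w generalizing G with
  | nil => simp [shf, dl]
  | cons a w ih =>
    simp only [shf]
    rw [ih]
    have e : (fun l => dl (K := K) [] (a :: l)) = (0 : K) • 0 := by ext; simp [dl]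
    rw [shf_comm, e, shf_smul_right]; simp

theorem Dr_letter (x y : X) : Dr y (dl (K := K) [x]) = if x = y then dl [] else 0 := by
  ext w
  rcases w with _ | ⟨a, w⟩
  · by_cases h : x = y
    · simp [dl, h]
    · have : y ≠ x := fun e => h e.symm
      simp [dl, h, this]
  · by_cases h : x = y <;> simp [dl, h]

/-- multiplication by a letter -/
def M (x : X) : (List X → K) →ₗ[K] (List X → K) := sh (dl [x])

theorem Dr_M (y x : X) (G : List X → K) :
    Dr y (M x G) = (if x = y then G else 0) + M x (Dr y G) := by
  unfold M
  rw [Dr_sh, Dr_letter]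
  by_cases h : x = y <;> simp [h, sh_one]

theorem M_nil (x : X) (G : List X → K) : M x G [] = 0 := by
  simp [M, sh_apply, shf, dl]

theorem M_comm (x y : X) (G : List X → K) : M x (M y G) = M y (M x G) := by
  ext w
  induction w using List.reverseRecOn generalizing G with
  | nil => simp [M_nil]
  | append_singleton w z ih =>
    rw [← Dr_apply z (M x _), ← Dr_apply z (M y _), Dr_M, Dr_M, Dr_M, Dr_M]
    simp only [map_add, Pi.add_apply, ih]
    by_cases h1 : x = z <;> by_cases h2 : y = z <;> simp [h1, h2]

theorem M_low (x : X) (k : ℕ) (F : List X → K) (hF : ∀ w, w.length < k → F w = 0) :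
    ∀ w, w.length < k + 1 → M x F w = 0 := by
  intro w
  induction w using List.reverseRecOn generalizing F k with
  | nil => simp [M_nil]
  | append_singleton w z ih =>
    intro hw
    simp only [List.length_append, List.length_singleton] at hw
    rw [← Dr_apply z (M x F), Dr_M, Pi.add_apply]
    obtain ⟨k, rfl⟩ : ∃ j, k = j + 1 := ⟨k - 1, by omega⟩
    rw [ih k (Dr z F) (fun w hw => hF _ (by simp; omega)) (by omega)]
    split_ifs
    · simp [hF w (by omega)]
    · simp

theorem M_hom (x : X) (k : ℕ) (F : List X → K) (hF : ∀ w, w.length ≠ k → F w = 0) :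
    ∀ w, w.length ≠ k + 1 → M x F w = 0 := by
  intro w
  induction w using List.reverseRecOn generalizing F k with
  | nil => simp [M_nil]
  | append_singleton w z ih =>
    intro hw
    simp only [List.length_append, List.length_singleton] at hw
    rw [← Dr_apply z (M x F), Dr_M, Pi.add_apply]
    have h1 : (if x = z then F else 0) w = 0 := by
      split_ifs
      · exact hF w (by omega)
      · rfl
    rw [h1, zero_add]
    rcases k with _ | k
    · have : Dr z F = 0 := by ext w; exact hF _ (by simp)
      rw [this]; simp
    · exact ih k (Dr z F) (fun w hw => hF _ (by simp; omega)) (by omega)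

variable [Fintype X]

/-- powers of the ideal generated by letters -/
def Ik (K X : Type) [Field K] [DecidableEq X] : ℕ → Submodule K (List X → K)
  | 0 => ⊤
  | k + 1 => ⨆ x : X, (Ik K X k).map (M x)

theorem Ik_low (k : ℕ) (F : List X → K) (hF : F ∈ Ik K X k) : ∀ w, w.length < k → F w = 0 := by
  induction k generalizing F with
  | zero => simp
  | succ k ih =>
    unfold Ik at hF
    induction hF using Submodule.iSup_induction' with
    | mem x G hG =>
      obtain ⟨e, he, rfl⟩ := hG
      exact M_low x k e (ih e he)
    | zero => simp
    | add G H _ _ h1 h2 => intro w hw; simp [h1 w hw, h2 w hw]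

/-- Euler operator -/
def W : (List X → K) →ₗ[K] (List X → K) := ∑ x, M x ∘ₗ Dr x

theorem W_apply (F : List X → K) : W F = ∑ x, M x (Dr x F) := by simp [W]

theorem M_mem (k : ℕ) (x : X) (F : List X → K) (hF : F ∈ Ik K X k) : M x F ∈ Ik K X (k + 1) := by
  unfold Ik
  exact Submodule.mem_iSup_of_mem x ⟨F, hF, rfl⟩

theorem W_M (x : X) (F : List X → K) : W (M x F) = M x F + M x (W F) := by
  simp only [W_apply, Dr_M, map_add, Finset.sum_add_distrib, map_sum]
  congr 1
  · rw [Finset.sum_eq_single x] <;> simp +contextual [eq_comm]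
  · exact Finset.sum_congr rfl fun y _ => M_comm _ _ _

theorem W_Ik (k : ℕ) (F : List X → K) (hF : F ∈ Ik K X k) :
    W F - (k : K) • F ∈ Ik K X (k + 1) := by
  induction k generalizing F with
  | zero =>
    simp only [Nat.cast_zero, zero_smul, sub_zero, W_apply]
    exact Submodule.sum_mem _ fun x _ => M_mem 0 x _ (by simp [Ik])
  | succ k ih =>
    unfold Ik at hF
    induction hF using Submodule.iSup_induction' with
    | mem x G hG =>
      obtain ⟨e, he, rfl⟩ := hG
      have : W (M x e) - ((k + 1 : ℕ) : K) • M x e = M x (W e - (k : K) • e) := by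
        rw [W_M, map_sub, map_smul]; push_cast; module
      rw [this]
      exact M_mem _ _ _ (ih e he)
    | zero => simp
    | add G H _ _ h1 h2 =>
      have := Submodule.add_mem _ h1 h2
      convert this using 1
      rw [map_add]; module

theorem W_ker [CharZero K] (C : List X → K) (h1 : C ∈ Ik K X 1) (h : W C = 0) : C = 0 := by
  have hk : ∀ k, C ∈ Ik K X (k + 1) := by
    intro k
    induction k with
    | zero => exact h1
    | succ k ih =>
      have := W_Ik _ _ ih
      rw [h, zero_sub, Submodule.neg_mem_iff] at this
      exact (Submodule.smul_mem_iff _ (by exact_mod_cast k.succ_ne_zero)).mp this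
  ext w
  exact Ik_low _ _ (hk w.length) w (by omega)

theorem main_inj [CharZero K] (F : List X → K) (hF : W F = (2 : K) • F)
    (hs : ∀ t y z, Dr t (Dr y (Dr z F)) = - Dr y (Dr t (Dr z F))) :
    ∀ t y z, Dr t (Dr y (Dr z F)) = 0 := by
  refine abstract_inj Dr M Dr_M M_comm ?_ F (by rw [← W_apply, hF]) hs
  intro e he
  rw [← W_apply] at he
  exact W_ker _ (Submodule.sum_mem _ fun x _ => M_mem 0 x _ (by simp [Ik])) he

end STP

namespace STP
variable {K X : Type} [Field K] [DecidableEq X] [Fintype X]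

/-- homogeneous skew functions -/
def Sk (K X : Type) [Field K] (n : ℕ) : Submodule K (List X → K) where
  carrier := {F | (∀ w : List X, w.length ≠ n → F w = 0) ∧
    ∀ t y : X, Dr t (Dr y F) = - Dr y (Dr t F)}
  zero_mem' := by simp
  add_mem' := by
    rintro F G ⟨h1, h2⟩ ⟨h3, h4⟩
    refine ⟨fun w hw => by simp [h1 w hw, h3 w hw], fun t y => ?_⟩
    simp only [map_add]; rw [h2, h4]; abel
  smul_mem' := by
    rintro c F ⟨h1, h2⟩
    refine ⟨fun w hw => by simp [h1 w hw], fun t y => ?_⟩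
    simp only [map_smul]; rw [h2, smul_neg]

/-- value of rotation -/
def rotv (F : List X → K) : List X → K
  | z :: y :: t :: w => F (w.reverse ++ [z, t, y])
  | _ => 0

/-- rotation of the last three letters -/
def rot : (List X → K) →ₗ[K] (List X → K) where
  toFun F := fun l => rotv F l.reverse
  map_add' F G := by
    ext l; simp only [Pi.add_apply]
    rcases l.reverse with _ | ⟨z, _ | ⟨y, _ | ⟨t, w⟩⟩⟩ <;> simp [rotv]
  map_smul' c F := by
    ext l; simp only [Pi.smul_apply]
    rcases l.reverse with _ | ⟨z, _ | ⟨y, _ | ⟨t, w⟩⟩⟩ <;> simp [rotv]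

theorem rot_hom (n : ℕ) (F : List X → K) (hF : ∀ w, w.length ≠ n → F w = 0) :
    ∀ w, w.length ≠ n → rot F w = 0 := by
  intro l hl
  change rotv F l.reverse = 0
  rw [← List.length_reverse] at hl
  generalize l.reverse = r at *
  rcases r with _ | ⟨z, _ | ⟨y, _ | ⟨t, w⟩⟩⟩ <;> simp [rotv]
  apply hF
  simpa using hl

theorem Dr_rot (t y z : X) (F : List X → K) :
    Dr t (Dr y (Dr z (rot F))) = Dr z (Dr t (Dr y F)) := by
  ext w
  simp [rot, rotv]

theorem Dr_hom (y : X) (n : ℕ) (F : List X → K) (hF : ∀ w, w.length ≠ n + 1 → F w = 0) :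
    ∀ w, w.length ≠ n → Dr y F w = 0 := fun w hw => hF _ (by simpa using hw)

theorem Dr_W (y : X) (F : List X → K) : Dr y (W F) = Dr y F + ∑ x, M x (Dr y (Dr x F)) := by
  simp only [W_apply, map_sum, Dr_M, Finset.sum_add_distrib]
  congr 1
  simp

theorem W_hom (n : ℕ) (F : List X → K) (hF : ∀ w, w.length ≠ n → F w = 0) :
    ∀ w, w.length ≠ n → W F w = 0 := by
  intro w hw
  rw [W_apply, Finset.sum_apply]
  refine Finset.sum_eq_zero fun x _ => ?_
  rcases n with _ | n
  · have : Dr x F = 0 := by ext w; exact hF _ (by simp)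
    rw [this]; simp
  · exact M_hom x n _ (Dr_hom x n F hF) w hw

theorem T_skew (F : List X → K)
    (hs : ∀ t y z, Dr t (Dr y (Dr z F)) = - Dr y (Dr t (Dr z F))) (t y : X) :
    Dr t (Dr y ((2 : K) • F - W F)) = - Dr y (Dr t ((2 : K) • F - W F)) := by
  have key : ∀ t y, Dr t (Dr y ((2 : K) • F - W F)) =
      Dr t (Dr y F) - Dr y (Dr t F) - ∑ x, M x (Dr t (Dr y (Dr x F))) := by
    intro t y
    simp only [map_sub, map_smul, Dr_W, map_add, map_sum, Dr_M, Finset.sum_add_distrib]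
    simp only [Finset.sum_ite_eq', Finset.mem_univ, if_true]
    rw [two_smul]; abel
  rw [key, key]
  have : ∑ x, M x (Dr y (Dr t (Dr x F))) = - ∑ x, M x (Dr t (Dr y (Dr x F))) := by
    rw [← Finset.sum_neg_distrib]
    exact Finset.sum_congr rfl fun x _ => by rw [hs, map_neg]
  rw [this]; abel

instance (n : ℕ) : FiniteDimensional K (Sk K X n) := by
  haveI : Finite {l : List X // l.length = n} :=
    inferInstanceAs (Finite (List.Vector X n))
  let g : Sk K X n →ₗ[K] ({l : List X // l.length = n} → K) :=
    { toFun := fun F l => F.1 l.1, map_add' := fun _ _ => rfl, map_smul' := fun _ _ => rfl }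
  refine FiniteDimensional.of_injective g ?_
  rw [injective_iff_map_eq_zero]
  intro F hF
  ext w
  by_cases h : w.length = n
  · exact congrFun hF ⟨w, h⟩
  · exact F.2.1 w h

theorem rot_skew (F : List X → K) (h : ∀ t y : X, Dr t (Dr y F) = - Dr y (Dr t F)) :
    ∀ t y z, Dr t (Dr y (Dr z (rot F))) = - Dr y (Dr t (Dr z (rot F))) := by
  intro t y z
  rw [Dr_rot, Dr_rot, h t y, map_neg]

theorem main_surj [CharZero K] (n : ℕ) (hn : 3 ≤ n) (F : List X → K) (hF : F ∈ Sk K X n) :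
    ∃ G : List X → K, (∀ w, w.length ≠ n → G w = 0) ∧
      (∀ t y z, Dr t (Dr y (Dr z G)) = - Dr y (Dr t (Dr z G))) ∧
      (2 : K) • G - W G = F := by
  let φ : (List X → K) →ₗ[K] (List X → K) := (2 : K) • rot - W ∘ₗ rot
  have hφ : ∀ F ∈ Sk K X n, φ F ∈ Sk K X n := by
    rintro F ⟨h1, h2⟩
    refine ⟨fun w hw => ?_, fun t y => T_skew (rot F) (rot_skew F h2) t y⟩
    simp [φ, rot_hom n F h1 w hw, W_hom n _ (rot_hom n F h1) w hw]
  have hinj : Function.Injective (φ.restrict hφ) := by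
    rw [injective_iff_map_eq_zero]
    rintro ⟨F, h1, h2⟩ h0
    have h0' : φ F = 0 := congrArg Subtype.val h0
    have h3 : W (rot F) = (2 : K) • rot F := (sub_eq_zero.mp h0').symm
    have h4 := main_inj _ h3 (rot_skew F h2)
    ext w
    change F w = 0
    by_cases hw : w.length = n
    · rcases List.eq_nil_or_concat w with rfl | ⟨w, y, rfl⟩
      · simp at hw; omega
      rcases List.eq_nil_or_concat w with rfl | ⟨w, t, rfl⟩
      · simp at hw; omega
      rcases List.eq_nil_or_concat w with rfl | ⟨w, z, rfl⟩
      · simp at hw; omega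
      have := congrFun (h4 t y z) w
      rw [Dr_rot] at this
      simpa using this
    · exact h1 w hw
  obtain ⟨G, hG⟩ := LinearMap.surjective_of_injective hinj ⟨F, hF⟩
  exact ⟨rot G.1, rot_hom n _ G.2.1, rot_skew _ G.2.2, congrArg Subtype.val hG⟩

/-- embedding of `Zin` in functions on words -/
noncomputable def io : Zin K X →ₗ[K] (List X → K) where
  toFun f := fun l => if h : l ≠ [] then f ⟨l, h⟩ else 0
  map_add' f g := by
    ext l
    by_cases h : l = []
    · simp [h]
    · simp only [Pi.add_apply, dif_pos h]; exact Finsupp.add_apply f g _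
  map_smul' c g := by
    ext l
    by_cases h : l = []
    · simp [h]
    · simp only [Pi.smul_apply, dif_pos h]; exact Finsupp.smul_apply c g _

theorem io_ne (f : Zin K X) (l : List X) (h : l ≠ []) : io f l = f ⟨l, h⟩ := dif_pos h

theorem io_nil (f : Zin K X) : io f [] = 0 := by simp [io]

theorem io_word (f : Zin K X) (w : Word X) : io f w.1 = f w := io_ne f w.1 w.2

theorem io_inj : Function.Injective (io : Zin K X →ₗ[K] (List X → K)) := by
  intro f g h
  ext w
  rw [← io_word, h, io_word]

theorem io_single (w : Word X) (b : K) : io (Finsupp.single w b) = b • dl w.1 := by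
  ext l
  by_cases h : l = w.1
  · subst h; rw [io_word]; simp [dl]
  · by_cases hl : l = []
    · subst hl; rw [io_nil]; simp [dl, h]
    · have : w ≠ ⟨l, hl⟩ := fun e => h (by rw [e])
      rw [io_ne _ _ hl, Finsupp.single_eq_of_ne this.symm]; simp [dl, h]

theorem io_letter (x : X) : io (ofLetter (K := K) x) = dl [x] :=
  (io_single _ 1).trans (one_smul K _)

theorem io_ofLists (ls : List (List X)) (h : ∀ l ∈ ls, l ≠ []) :
    io (ofLists (K := K) ls) = (ls.map dl).sum := by
  induction ls with
  | nil => simp [ofLists]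
  | cons a ls ih =>
    have := ih (fun l hl => h l (by simp [hl]))
    simp only [ofLists, List.map_cons, List.sum_cons, map_add] at this ⊢
    rw [this]
    congr 1
    have ha := h a (by simp)
    rcases a with _ | ⟨x, a⟩
    · simp at ha
    · exact (io_single _ 1).trans (one_smul K _)

theorem dl_cons (a : X) (u : List X) (c : X) :
    (fun l => dl (K := K) (a :: u) (c :: l)) = (if c = a then (1 : K) else 0) • dl u := by
  ext l; by_cases h : c = a <;> simp [dl, h]

theorem sum_map_cons (c a : X) (l : List X) (ls : List (List X)) :
    ((ls.map fun w => a :: w).map (dl (K := K))).sum (c :: l) =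
      (if c = a then (1 : K) else 0) * (ls.map (dl (K := K))).sum l := by
  induction ls with
  | nil => simp
  | cons b ls ih =>
    simp only [List.map_cons, List.sum_cons, Pi.add_apply] at ih ⊢
    rw [ih, mul_add]
    congr 1
    exact congrFun (dl_cons a b c) l

theorem sum_map_cons_nil (a : X) (ls : List (List X)) :
    ((ls.map fun w => a :: w).map (dl (K := K))).sum [] = 0 := by
  induction ls with
  | nil => simp
  | cons b ls ih =>
    simp only [List.map_cons, List.sum_cons, Pi.add_apply] at ih ⊢
    rw [ih]; simp [dl]

theorem sh_dl (u v : List X) : sh (dl u) (dl v) = ((shuffles u v).map (dl (K := K))).sum := by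
  induction u, v using shuffles.induct with
  | case1 l => simp [shuffles, sh_one]
  | case2 a as => rw [sh_comm, sh_one]; simp [shuffles]
  | case3 a as b bs ih1 ih2 =>
    ext l
    rcases l with _ | ⟨c, l⟩
    · rw [shuffles, List.map_append, List.sum_append, Pi.add_apply, sum_map_cons_nil,
        sum_map_cons_nil]
      simp [sh_apply, shf, dl]
    · rw [shuffles, List.map_append, List.sum_append, Pi.add_apply, sum_map_cons, sum_map_cons,
        ← ih1, ← ih2]
      rw [sh_apply, shf, dl_cons, dl_cons, shf_smul_right, shf_comm, shf_smul_right, shf_comm]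
      rfl

theorem Dr_sum_snoc (y z : X) (ls : List (List X)) :
    Dr y (((ls.map fun s => s ++ [z]).map (dl (K := K))).sum) =
      (if z = y then (1 : K) else 0) • (ls.map (dl (K := K))).sum := by
  induction ls with
  | nil => simp
  | cons b ls ih =>
    simp only [List.map_cons, List.sum_cons, map_add] at ih ⊢
    rw [ih, smul_add]
    congr 1
    ext l
    by_cases h : z = y
    · simp [dl, h]
    · have : y ≠ z := fun e => h e.symm
      simp [dl, h, this]

theorem Dr_dl (y : X) (w : List X) (h : w ≠ []) :
    Dr y (dl (K := K) w) = (if w.getLast h = y then (1 : K) else 0) • dl w.dropLast := by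
  have := Dr_sum_snoc (K := K) y (w.getLast h) [w.dropLast]
  simpa [List.dropLast_append_getLast] using this

theorem zmul_add_left (f f' g : Zin K X) : zmul (f + f') g = zmul f g + zmul f' g := by
  unfold zmul
  apply Finsupp.sum_add_index'
  · intro u; simp
  · intro u a b; simp [add_mul, add_smul, Finsupp.sum_add]

theorem zmul_add_right (f g g' : Zin K X) : zmul f (g + g') = zmul f g + zmul f g' := by
  unfold zmul
  rw [← Finsupp.sum_add]
  apply Finsupp.sum_congr
  intro u _
  apply Finsupp.sum_add_index'
  · intro u; simp
  · intro u a b; simp [mul_add, add_smul]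

theorem zmul_nil (f g : Zin K X) : io (zmul f g) [] = 0 := io_nil _

theorem Dr_zmul (y : X) (f g : Zin K X) : Dr y (io (zmul f g)) = sh (io f) (Dr y (io g)) := by
  induction f using Finsupp.induction_linear with
  | zero => simp [zmul]
  | add f f' h1 h2 => rw [zmul_add_left]; simp [h1, h2]
  | single u a =>
    induction g using Finsupp.induction_linear with
    | zero => simp [zmul]
    | add f f' h1 h2 => rw [zmul_add_right]; simp [h1, h2]
    | single w b =>
      have : zmul (Finsupp.single u a) (Finsupp.single w b) = (a * b) •
          ofLists (K := K) ((shuffles u.1 w.1.dropLast).map fun s => s ++ [w.1.getLast w.2]) := by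
        simp [zmul]
      rw [this, map_smul, io_ofLists _ (by simp), map_smul, Dr_sum_snoc, io_single, io_single,
        (Dr y).map_smul, Dr_dl y w.1 w.2, LinearMap.map_smul₂, map_smul, map_smul, sh_dl]
      simp only [smul_smul]
      congr 1; ring

theorem Dr_zbracket (y : X) (f g : Zin K X) :
    Dr y (io (zbracket f g)) = sh (io f) (Dr y (io g)) - sh (io g) (Dr y (io f)) := by
  unfold zbracket
  rw [map_sub, map_sub, Dr_zmul, Dr_zmul]

theorem InST_skew (f : Zin K X) (hf : InST f) :
    ∀ t y : X, Dr t (Dr y (io f)) = - Dr y (Dr t (io f)) := by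
  induction hf with
  | letter x =>
    intro t y
    rw [io_letter, Dr_letter, Dr_letter]
    have : ∀ a b : X, Dr a (if x = b then dl (K := K) [] else 0) = 0 := by
      intro a b
      split_ifs
      · ext w; simp [dl]
      · simp
    rw [this, this]; simp
  | zero => simp
  | add _ _ h1 h2 => intro t y; simp only [map_add]; rw [h1, h2]; abel
  | smul c _ h1 => intro t y; simp only [map_smul]; rw [h1, smul_neg]
  | @bracket f g _ _ h1 h2 =>
    intro t y
    simp only [Dr_zbracket, map_sub, Dr_sh]
    rw [h2 t y, h1 t y, map_neg, map_neg, sh_comm (Dr t (io g)), sh_comm (Dr t (io f))]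
    abel

theorem InST_sum {ι : Type} (s : Finset ι) (f : ι → Zin K X) (h : ∀ i, InST (f i)) :
    InST (∑ i ∈ s, f i) := by
  classical
  induction s using Finset.induction_on with
  | empty => simpa using InST.zero
  | insert a s ha ih => rw [Finset.sum_insert ha]; exact InST.add (h a) ih

theorem Dr_br_letter (y x : X) (f : Zin K X) :
    Dr y (io (zbracket f (ofLetter x))) = (if x = y then io f else 0) - M x (Dr y (io f)) := by
  rw [Dr_zbracket]
  rw [io_letter, Dr_letter]
  congr 1
  split_ifs
  · rw [sh_comm, sh_one]
  · simp

theorem assemble (f : X → Zin K X) (F : List X → K) (h0 : F [] = 0)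
    (h : ∀ y, io (f y) - ∑ x, M x (Dr y (io (f x))) = Dr y F) :
    io (∑ x, zbracket (f x) (ofLetter x)) = F := by
  apply ext_Dr
  · rw [io_nil, h0]
  · intro y
    rw [← h, map_sum, map_sum]
    simp only [Dr_br_letter, Finset.sum_sub_distrib]
    simp

theorem InST_one (F : List X → K) (hF : ∀ w, w.length ≠ 1 → F w = 0) :
    ∃ f, InST f ∧ io f = F := by
  refine ⟨∑ x, F [x] • ofLetter x, InST_sum _ _ fun x => InST.smul _ (InST.letter x), ?_⟩
  ext w
  rw [map_sum, Finset.sum_apply]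
  by_cases hw : w.length = 1
  · obtain ⟨a, rfl⟩ := List.length_eq_one_iff.mp hw
    simp [io_letter, dl]
  · rw [hF w hw]
    refine Finset.sum_eq_zero fun x _ => ?_
    have : w ≠ [x] := by rintro rfl; simp at hw
    simp [io_letter, dl, this]

theorem skew_InST [CharZero K] (n : ℕ) (F : List X → K) (hF : F ∈ Sk K X (n + 2)) :
    ∃ f, InST f ∧ io f = F := by
  induction n generalizing F with
  | zero =>
    obtain ⟨h1, h2⟩ := hF
    choose f hf hf' using fun x => InST_one ((2 : K)⁻¹ • Dr x F)
      (fun w hw => by rw [Pi.smul_apply, Dr_hom x 1 F h1 w hw, smul_zero])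
    refine ⟨_, InST_sum Finset.univ _ fun x => InST.bracket (hf x) (InST.letter x), ?_⟩
    refine assemble f F (h1 _ (by simp)) fun y => ?_
    simp only [hf', map_smul, ← Finset.smul_sum, ← smul_sub]
    rw [inv_smul_eq_iff₀ two_ne_zero, two_smul, sub_eq_add_neg]
    congr 1
    apply ext_Dr
    · rw [Dr_apply, h1 _ (by simp), Pi.neg_apply, Finset.sum_apply]
      simp [M_nil]
    · intro z
      simp only [map_neg, map_sum, Dr_M, Finset.sum_add_distrib]
      have : ∀ x, Dr z (Dr y (Dr x F)) = 0 := fun x => by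
        ext w; exact h1 _ (by simp)
      simp only [this, map_zero, Finset.sum_const_zero, add_zero]
      simp only [Finset.sum_ite_eq', Finset.mem_univ, if_true]
      rw [h2 z y]
  | succ n ih =>
    obtain ⟨G, g1, g2, g3⟩ := main_surj (n + 1 + 2) (by omega) F hF
    choose f hf hf' using fun x => ih (Dr x G)
      ⟨Dr_hom x _ G g1, fun t y => g2 t y x⟩
    refine ⟨_, InST_sum Finset.univ _ fun x => InST.bracket (hf x) (InST.letter x), ?_⟩
    refine assemble f F (hF.1 _ (by simp)) fun y => ?_
    simp only [hf', ← g3, map_sub, map_smul, Dr_W]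
    rw [two_smul]; abel

end STP

namespace STP

open Finset in
theorem prod_fact {q : ℕ} (m : Fin q → ℕ) (i : Fin q) (h : m i ≠ 0) :
    ∏ k, (m k).factorial = m i * ∏ k, ((m - Pi.single i 1 : Fin q → ℕ) k).factorial := by
  have hi : (m - Pi.single i 1 : Fin q → ℕ) i = m i - 1 := by simp
  have hk : ∀ k, k ≠ i → (m - Pi.single i 1 : Fin q → ℕ) k = m k := fun k hk => by
    simp [Pi.single_eq_of_ne hk]
  generalize (m - Pi.single i 1 : Fin q → ℕ) = m' at *
  rw [← Finset.mul_prod_erase univ (fun k => (m k).factorial) (mem_univ i),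
    ← Finset.mul_prod_erase univ (fun k => (m' k).factorial) (mem_univ i),
    ← mul_assoc]
  congr 1
  · rw [hi]; exact (Nat.mul_factorial_pred h).symm
  · refine Finset.prod_congr rfl fun k hk' => ?_
    rw [hk k (Finset.mem_erase.mp hk').1]

theorem sum_single {q : ℕ} (m : Fin q → ℕ) (i : Fin q) (h : m i ≠ 0) :
    ∑ k, m k = ∑ k, (m - Pi.single i 1 : Fin q → ℕ) k + 1 := by
  have : ∀ k, m k = (m - Pi.single i 1 : Fin q → ℕ) k + (Pi.single i 1 : Fin q → ℕ) k := by
    intro k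
    by_cases hk : k = i
    · subst hk; simp; omega
    · simp [Pi.single_eq_of_ne hk]
  conv_lhs => enter [2, k]; rw [this k]
  rw [Finset.sum_add_distrib]; simp

theorem count_cons_iff {q : ℕ} (m : Fin q → ℕ) (i : Fin q) (h : m i ≠ 0) (w : List (Fin q)) :
    (∀ k, (i :: w).count k = m k) ↔ ∀ k, w.count k = (m - Pi.single i 1 : Fin q → ℕ) k := by
  refine forall_congr' fun k => ?_
  by_cases hk : k = i
  · subst hk; simp; omega
  · have : i ≠ k := fun e => hk e.symm
    simp [Pi.single_eq_of_ne hk, List.count_cons, this]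

theorem length_of_count {q : ℕ} (m : Fin q → ℕ) (w : List (Fin q)) (h : ∀ k, w.count k = m k) :
    w.length = ∑ k, m k := by
  simp only [← h]
  exact (List.sum_toFinset_count_eq_length w).symm.trans
    (Finset.sum_subset (Finset.subset_univ _) fun k _ hk => by
      simpa [List.count_eq_zero] using hk)

theorem finite_len {q : ℕ} (N : ℕ) (P : List (Fin q) → Prop) (h : ∀ w, P w → w.length = N) :
    Finite {w // P w} := by
  haveI : Finite {l : List (Fin q) // l.length = N} :=
    inferInstanceAs (Finite (List.Vector (Fin q) N))
  exact Finite.of_injective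
    (fun w : {w // P w} => (⟨w.1, h _ w.2⟩ : {l : List (Fin q) // l.length = N}))
    (fun a b hab => Subtype.ext (Subtype.mk.inj hab))

instance {q : ℕ} (m : Fin q → ℕ) : Finite {w : List (Fin q) // ∀ k, w.count k = m k} :=
  finite_len _ _ (length_of_count m)

theorem finite_cons {q : ℕ} (m : Fin q → ℕ) (i : Fin q) :
    Finite {w : List (Fin q) // ∀ k, (i :: w).count k = m k} :=
  finite_len (∑ k, m k - 1) _ fun w hw => by
    have := length_of_count m _ hw
    simp at this; omega

theorem card_words {q : ℕ} (N : ℕ) (m : Fin q → ℕ) (hN : ∑ k, m k = N) :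
    Nat.card {w : List (Fin q) // ∀ k, w.count k = m k} * ∏ k, (m k).factorial
      = N.factorial := by
  induction N generalizing m with
  | zero =>
    have h0 : ∀ k, m k = 0 := by simpa using hN
    have : Nat.card {w : List (Fin q) // ∀ k, w.count k = m k} = 1 := by
      rw [Nat.card_eq_one_iff_unique]
      refine ⟨⟨fun a b => ?_⟩, ⟨⟨[], by simp [h0]⟩⟩⟩
      have e : ∀ a : {w : List (Fin q) // ∀ k, w.count k = m k}, a.1 = [] := by
        intro a
        have := length_of_count m a.1 a.2
        rw [hN] at this
        exact List.length_eq_zero_iff.mp this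
      exact Subtype.ext ((e a).trans (e b).symm)
    rw [this]; simp [h0]
  | succ N ih =>
    haveI := finite_cons m
    let e : {w : List (Fin q) // ∀ k, w.count k = m k} ≃
        Σ i : Fin q, {w : List (Fin q) // ∀ k, (i :: w).count k = m k} :=
      { toFun := fun w => match w with
          | ⟨[], h⟩ => absurd (length_of_count m [] h) (by rw [hN]; simp)
          | ⟨i :: w, h⟩ => ⟨i, w, h⟩
        invFun := fun p => ⟨p.1 :: p.2.1, p.2.2⟩
        left_inv := by
          rintro ⟨_ | ⟨i, w⟩, h⟩
          · exact absurd (length_of_count m [] h) (by rw [hN]; simp)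
          · rfl
        right_inv := by rintro ⟨i, w, h⟩; rfl }
    rw [Nat.card_congr e, Nat.card_sigma, Finset.sum_mul]
    have : ∀ i, Nat.card {w : List (Fin q) // ∀ k, (i :: w).count k = m k} *
        ∏ k, (m k).factorial = m i * N.factorial := by
      intro i
      by_cases h : m i = 0
      · haveI : IsEmpty {w : List (Fin q) // ∀ k, (i :: w).count k = m k} :=
          ⟨fun w => by have := w.2 i; simp [h] at this⟩
        simp [h]
      · have hs := sum_single m i h
        rw [Nat.card_congr (Equiv.subtypeEquivRight (count_cons_iff m i h)), prod_fact m i h,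
          ← ih (m - Pi.single i 1) (by omega)]
        ring
    rw [Finset.sum_congr rfl fun i _ => this i, ← Finset.sum_mul, hN, Nat.factorial_succ]

theorem card_two {q : ℕ} (m : Fin q → ℕ) (i j : Fin q) (hij : i ≠ j) :
    Nat.card {w : List (Fin q) // ∀ k, (w ++ [i, j]).count k = m k} * ∏ k, (m k).factorial
      = (∑ k, m k - 2).factorial * m i * m j := by
  have e0 : ∀ w : List (Fin q), (∀ k, (w ++ [i, j]).count k = m k) ↔
      ∀ k, (i :: j :: w).count k = m k := by
    intro w
    refine forall_congr' fun k => ?_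
    rw [(List.perm_append_comm (l₁ := w) (l₂ := [i, j])).count_eq]; rfl
  rw [Nat.card_congr (Equiv.subtypeEquivRight e0)]
  by_cases h : m i = 0
  · haveI : IsEmpty {w : List (Fin q) // ∀ k, (i :: j :: w).count k = m k} :=
      ⟨fun w => by have := w.2 i; simp [h] at this⟩
    simp [h]
  have hs := sum_single m i h
  have hj : (m - Pi.single i 1 : Fin q → ℕ) j = m j := by
    simp [Pi.single_eq_of_ne hij.symm]
  rw [Nat.card_congr (Equiv.subtypeEquivRight fun w => count_cons_iff m i h (j :: w))]
  by_cases h' : m j = 0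
  · haveI : IsEmpty {w : List (Fin q) //
        ∀ k, (j :: w).count k = (m - Pi.single i 1 : Fin q → ℕ) k} :=
      ⟨fun w => by have := w.2 j; rw [hj] at this; simp [h'] at this⟩
    simp [h']
  have h'' : (m - Pi.single i 1 : Fin q → ℕ) j ≠ 0 := by rw [hj]; exact h'
  have hs' := sum_single _ j h''
  rw [Nat.card_congr (Equiv.subtypeEquivRight fun w => count_cons_iff _ j h'' w),
    prod_fact m i h, prod_fact _ j h'', hj,
    ← card_words (∑ k, m k - 2) (m - Pi.single i 1 - Pi.single j 1) (by omega)]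
  ring

/-- the multihomogeneous skew elements -/
noncomputable def PP (K : Type) [Field K] {q : ℕ} (m : Fin q → ℕ) :
    Submodule K (Zin K (Fin q)) where
  carrier := {f | (∀ w : Word (Fin q), ¬ (∀ i, w.1.count i = m i) → f w = 0) ∧
    ∀ t y : Fin q, Dr t (Dr y (io f)) = - Dr y (Dr t (io f))}
  zero_mem' := by simp
  add_mem' := by
    rintro F G ⟨h1, h2⟩ ⟨h3, h4⟩
    refine ⟨fun w hw => by simp [h1 w hw, h3 w hw], fun t y => ?_⟩
    simp only [map_add]; rw [h2, h4]; abel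
  smul_mem' := by
    rintro c F ⟨h1, h2⟩
    refine ⟨fun w hw => by simp [h1 w hw], fun t y => ?_⟩
    simp only [map_smul]; rw [h2, smul_neg]

theorem io_count {K : Type} [Field K] {q : ℕ} (m : Fin q → ℕ) (f : Zin K (Fin q))
    (h : ∀ w : Word (Fin q), ¬ (∀ i, w.1.count i = m i) → f w = 0) (w : List (Fin q))
    (hw : ¬ ∀ i, w.count i = m i) : io f w = 0 := by
  by_cases h0 : w = []
  · subst h0; exact io_nil f
  · rw [io_ne f w h0]; exact h _ hw

theorem io_len {K : Type} [Field K] {q : ℕ} (m : Fin q → ℕ) (f : Zin K (Fin q))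
    (h : ∀ w : Word (Fin q), ¬ (∀ i, w.1.count i = m i) → f w = 0) (w : List (Fin q))
    (hw : w.length ≠ ∑ k, m k) : io f w = 0 :=
  io_count m f h w fun hc => hw (length_of_count m w hc)

theorem span_eq (K : Type) [Field K] [CharZero K] {q : ℕ} (m : Fin q → ℕ)
    (h2 : 2 ≤ ∑ k, m k) :
    Submodule.span K {f : Zin K (Fin q) | InST f ∧
          ∀ w ∈ f.support, ∀ i : Fin q, (w : Word (Fin q)).1.count i = m i} = PP K m := by
  have : {f : Zin K (Fin q) | InST f ∧
      ∀ w ∈ f.support, ∀ i : Fin q, (w : Word (Fin q)).1.count i = m i} = PP K m := by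
    ext f
    constructor
    · rintro ⟨h1, h2⟩
      refine ⟨fun w hw => ?_, InST_skew f h1⟩
      by_contra h
      exact hw (h2 w (Finsupp.mem_support_iff.mpr h))
    · rintro ⟨h1, h3⟩
      refine ⟨?_, fun w hw => ?_⟩
      · obtain ⟨g, hg, hg'⟩ := skew_InST (∑ k, m k - 2) (io f)
          ⟨fun w hw => io_len m f h1 w (by omega), h3⟩
        rwa [← io_inj hg']
      · by_contra h
        exact Finsupp.mem_support_iff.mp hw (h1 w h)
  rw [this, Submodule.span_eq]

/-- index type of the basis -/
abbrev Idx {q : ℕ} (m : Fin q → ℕ) : Type :=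
  Σ i : Fin q, Σ j : {j // j ∈ Finset.Ioi i},
    {w : List (Fin q) // ∀ k, (w ++ [i, j.1]).count k = m k}

/-- coordinates -/
noncomputable def coor (K : Type) [Field K] {q : ℕ} (m : Fin q → ℕ) :
    PP K m →ₗ[K] (Idx m → K) where
  toFun f p := io f.1 (p.2.2.1 ++ [p.1, p.2.1.1])
  map_add' f g := by ext p; simp
  map_smul' c g := by ext p; simp

theorem skew_val {K : Type} [Field K] {q : ℕ} (F : List (Fin q) → K)
    (h : ∀ t y : Fin q, Dr t (Dr y F) = - Dr y (Dr t F)) (w : List (Fin q)) (a b : Fin q) :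
    F (w ++ [a, b]) = - F (w ++ [b, a]) := by
  have := congrFun (h a b) w
  simpa using this

theorem coor_inj (K : Type) [Field K] [CharZero K] {q : ℕ} (m : Fin q → ℕ)
    (h2 : 2 ≤ ∑ k, m k) : Function.Injective (coor K m) := by
  rw [injective_iff_map_eq_zero]
  rintro ⟨f, h1, h3⟩ h0
  have key : ∀ w a b, a < b → io f (w ++ [a, b]) = 0 := by
    intro w a b hab
    by_cases hc : ∀ k, (w ++ [a, b]).count k = m k
    · exact congrFun h0 ⟨a, ⟨b, by simpa using hab⟩, w, hc⟩
    · exact io_count m f h1 _ hc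
  ext1
  change f = 0
  apply io_inj
  rw [map_zero]
  ext w
  by_cases hw : w.length = ∑ k, m k
  · rcases List.eq_nil_or_concat w with rfl | ⟨w, b, rfl⟩
    · simp at hw; omega
    rcases List.eq_nil_or_concat w with rfl | ⟨w, a, rfl⟩
    · simp at hw; omega
    simp only [List.append_assoc, List.singleton_append, List.concat_eq_append,
      List.cons_append, List.nil_append, Pi.zero_apply]
    rcases lt_trichotomy a b with h | h | h
    · exact key w a b h
    · subst h
      have := skew_val _ h3 w a a
      exact CharZero.eq_neg_self_iff.mp this
    · rw [skew_val _ h3, key w b a h, neg_zero]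
  · exact io_len m f h1 w hw

open Classical in
/-- extension of a coefficient family, on reversed words -/
noncomputable def exv {K : Type} [Field K] {q : ℕ} (m : Fin q → ℕ) (c : Idx m → K) :
    List (Fin q) → K
  | b :: a :: r =>
      (if h : a < b ∧ ∀ k, (r.reverse ++ [a, b]).count k = m k then
        c ⟨a, ⟨b, by simpa using h.1⟩, r.reverse, h.2⟩ else 0) -
      (if h : b < a ∧ ∀ k, (r.reverse ++ [b, a]).count k = m k then
        c ⟨b, ⟨a, by simpa using h.1⟩, r.reverse, h.2⟩ else 0)
  | _ => 0

theorem exv_count {K : Type} [Field K] {q : ℕ} (m : Fin q → ℕ) (c : Idx m → K)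
    (l : List (Fin q)) (h : ¬ ∀ k, l.count k = m k) : exv m c l = 0 := by
  rcases l with _ | ⟨b, _ | ⟨a, r⟩⟩
  · rfl
  · rfl
  have e1 : ∀ k, (r.reverse ++ [a, b]).count k = (b :: a :: r).count k := by
    intro k; apply List.Perm.count_eq
    have := List.reverse_perm (b :: a :: r)
    simpa using this
  have e2 : ∀ k, (r.reverse ++ [b, a]).count k = (b :: a :: r).count k := by
    intro k; rw [← e1 k]
    simp only [List.count_append]; congr 1
    exact (List.Perm.swap a b []).count_eq k
  simp only [exv]
  rw [dif_neg, dif_neg, sub_zero]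
  · rintro ⟨-, h'⟩; exact h fun k => (e2 k).symm.trans (h' k)
  · rintro ⟨-, h'⟩; exact h fun k => (e1 k).symm.trans (h' k)

theorem coor_surj (K : Type) [Field K] [CharZero K] {q : ℕ} (m : Fin q → ℕ)
    (h2 : 2 ≤ ∑ k, m k) : Function.Surjective (coor K m) := by
  intro c
  have hc : ∀ w : List (Fin q), ¬ (∀ k, w.count k = m k) → exv m c w.reverse = 0 := by
    intro w hw
    apply exv_count
    simpa using hw
  have hs : ∀ t y : Fin q, Dr t (Dr y fun w => exv m c w.reverse) =
      - Dr y (Dr t fun w => exv m c w.reverse) := by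
    intro t y
    ext w
    simp [exv]
  obtain ⟨f, hf, hf'⟩ := skew_InST (∑ k, m k - 2) (fun w => exv m c w.reverse)
    ⟨fun w hw => hc w fun h => hw (by rw [length_of_count m w h]; omega), hs⟩
  refine ⟨⟨f, fun w hw => ?_, InST_skew f hf⟩, ?_⟩
  · rw [← io_word, hf']; exact hc _ hw
  · ext ⟨i, ⟨j, hj⟩, w, hw⟩
    change io f (w ++ [i, j]) = _
    rw [hf']
    have hij : i < j := by simpa using hj
    have hji : ¬ j < i := not_lt.mpr hij.le
    simp only [List.reverse_append, List.reverse_cons, List.reverse_nil, List.nil_append,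
      List.cons_append, exv, List.reverse_reverse]
    rw [dif_pos ⟨hij, hw⟩, dif_neg (fun h => hji h.1), sub_zero]

theorem finrank_PP (K : Type) [Field K] [CharZero K] {q : ℕ} (m : Fin q → ℕ)
    (h2 : 2 ≤ ∑ k, m k) :
    Module.finrank K (PP K m) = ∑ i : Fin q, ∑ j ∈ Finset.Ioi i,
      Nat.card {w : List (Fin q) // ∀ k, (w ++ [i, j]).count k = m k} := by
  haveI : ∀ i j, Finite {w : List (Fin q) // ∀ k, (w ++ [i, j]).count k = m k} := fun i j =>
    finite_len (∑ k, m k - 2) _ fun w hw => by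
      have := length_of_count m _ hw
      simp at this; omega
  letI : Fintype (Idx m) := Fintype.ofFinite _
  rw [(LinearEquiv.ofBijective (coor K m) ⟨coor_inj K m h2, coor_surj K m h2⟩).finrank_eq,
    Module.finrank_fintype_fun_eq_card, ← Nat.card_eq_fintype_card, Nat.card_sigma]
  refine Finset.sum_congr rfl fun i _ => ?_
  rw [Nat.card_sigma]
  exact Finset.sum_coe_sort (Finset.Ioi i)
    (fun j => Nat.card {w : List (Fin q) // ∀ k, (w ++ [i, j]).count k = m k})

end STP

/-- Dimension of the multihomogeneous component `ST(X)_{m_1,…,m_q}` of the free special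
Tortkara algebra on `q` generators:
`dim ST(X)_{m_1,…,m_q} = Σ_{i<j} ((n−2)!/(m_1!⋯m_q!))·m_i·m_j` where `n = m_1+⋯+m_q ≥ 2`;
in particular the multilinear part has dimension `q!/2`. -/
theorem dim_ST_multihomogeneous (K : Type) [Field K] [CharZero K] (q : ℕ) (m : Fin q → ℕ)
    (n : ℕ) (hn : n = ∑ i, m i) (h2 : 2 ≤ n) :
    ((Module.finrank K (Submodule.span K
        {f : Zin K (Fin q) | InST f ∧
          ∀ w ∈ f.support, ∀ i : Fin q, (w : Word (Fin q)).1.count i = m i}) : ℚ) =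
      ∑ i : Fin q, ∑ j ∈ Finset.Ioi i,
        (((n - 2).factorial * m i * m j : ℕ) : ℚ) / ∏ k : Fin q, ((m k).factorial : ℚ)) ∧
    ((∀ i, m i = 1) →
      Module.finrank K (Submodule.span K
        {f : Zin K (Fin q) | InST f ∧
          ∀ w ∈ f.support, ∀ i : Fin q, (w : Word (Fin q)).1.count i = m i}) * 2
        = q.factorial) := by
  have h2' : 2 ≤ ∑ k, m k := hn ▸ h2
  rw [STP.span_eq K m h2']
  have main : (Module.finrank K (STP.PP K m) : ℚ) = ∑ i : Fin q, ∑ j ∈ Finset.Ioi i,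
        (((n - 2).factorial * m i * m j : ℕ) : ℚ) / ∏ k : Fin q, ((m k).factorial : ℚ) := by
    rw [STP.finrank_PP K m h2']
    push_cast
    refine Finset.sum_congr rfl fun i _ => Finset.sum_congr rfl fun j hj => ?_
    have hij : i < j := by simpa using hj
    have hp : (∏ k : Fin q, ((m k).factorial : ℚ)) ≠ 0 :=
      Finset.prod_ne_zero_iff.mpr fun k _ => by exact_mod_cast (m k).factorial_ne_zero
    rw [eq_div_iff hp, hn]
    exact_mod_cast STP.card_two m i j hij.ne
  refine ⟨main, fun h1 => ?_⟩
  have hq : n = q := by rw [hn]; simp [h1]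
  subst hq
  simp only [h1, Nat.factorial_one, Nat.cast_one, Finset.prod_const_one, div_one, mul_one,
    Finset.sum_const, Fin.card_Ioi, nsmul_eq_mul] at main
  rw [← Finset.sum_mul] at main
  have main' : Module.finrank K (STP.PP K m) = (∑ i : Fin n, (n - 1 - (i : ℕ))) *
      (n - 2).factorial := by exact_mod_cast main
  rw [main', Fin.sum_univ_eq_sum_range (fun i => n - 1 - i) n, Finset.sum_range_reflect
    (fun i => i) n, mul_right_comm, Finset.sum_range_id_mul_two]
  obtain ⟨r, rfl⟩ : ∃ r, n = r + 2 := ⟨n - 2, by omega⟩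
  simp [Nat.factorial_succ]; ring
end

section
/- Let a ∈ Zin(X) and let b, c ∈ ST(X) be Lie elements. Then (a∘b)∘c − (a∘c)∘b ∈ ST(X) and b∘c − c∘b ∈ ST(X). -/
section Abstract

variable {K A X : Type} [Field K] [CharZero K] [AddCommGroup A] [Module K A]

/-- The elements `a` for which `(ab)c - (ac)b` lies in `S` for all `b, c` in `S`. -/
def goodSub (m : A →ₗ[K] A →ₗ[K] A) (S : Submodule K A) : Submodule K A where
  carrier := {a | ∀ b ∈ S, ∀ c ∈ S, m (m a b) c - m (m a c) b ∈ S}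
  zero_mem' := by intro b _ c _; simp
  add_mem' := by
    intro p q hp hq b hb c hc
    have := S.add_mem (hp b hb c hc) (hq b hb c hc)
    convert this using 1
    simp only [map_add, LinearMap.add_apply]
    abel
  smul_mem' := by
    intro r p hp b hb c hc
    have := S.smul_mem r (hp b hb c hc)
    convert this using 1
    simp only [map_smul, LinearMap.smul_apply, smul_sub]

theorem good_of_mem (m : A →ₗ[K] A →ₗ[K] A) (S : Submodule K A)
    (hm : ∀ a b c, m a (m b c) = m (m a b) c + m (m b a) c)
    (hS : ∀ a ∈ S, ∀ b ∈ S, m a b - m b a ∈ S) (a : A) (ha : a ∈ S) :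
    a ∈ goodSub m S := by
  intro b hb c hc
  have h1 := hS _ (hS c hc a ha) b hb
  have h2 := hS _ (hS a ha b hb) c hc
  have h3 := S.smul_mem ((1:K)/2) (S.add_mem h1 h2)
  convert h3 using 1
  simp only [map_sub, LinearMap.sub_apply, hm]
  module

theorem good_step (m : A →ₗ[K] A →ₗ[K] A) (S : Submodule K A)
    (hm : ∀ a b c, m a (m b c) = m (m a b) c + m (m b a) c)
    (hS : ∀ a ∈ S, ∀ b ∈ S, m a b - m b a ∈ S) (a d : A) (ha : a ∈ goodSub m S)
    (hd : d ∈ S) : m a d + (m a d + m d a) ∈ goodSub m S := by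
  intro b hb c hc
  have h1 := ha _ (hS c hc b hb) d hd
  have h2 := ha _ (hS d hd c hc) b hb
  have h3 := ha _ (hS b hb d hd) c hc
  have h4 := hS _ (ha b hb c hc) d hd
  have h5 := S.sub_mem (S.sub_mem (S.add_mem h1 h4) h2) h3
  convert h5 using 1
  simp only [map_sub, LinearMap.sub_apply, hm, map_add, LinearMap.add_apply]
  module

/-- Left-normed words, as lists with the last letter first. -/
def lnw (m : A →ₗ[K] A →ₗ[K] A) (i : X → A) : X → List X → A
  | x, [] => i x
  | x, y :: t => m (lnw m i y t) (i x)

/-- Span of words of length `n + 1`. -/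
def lnwSpan (m : A →ₗ[K] A →ₗ[K] A) (i : X → A) (n : ℕ) : Submodule K A :=
  Submodule.span K {a | ∃ x t, t.length = n ∧ a = lnw m i x t}

/-- Iterated shuffle with letters. -/
def shl (m : A →ₗ[K] A →ₗ[K] A) (i : X → A) (a : A) : List X → A
  | [] => a
  | x :: t => m (shl m i a t) (i x) + m (i x) (shl m i a t)

theorem mul_letter_mem (m : A →ₗ[K] A →ₗ[K] A) (i : X → A) (n : ℕ) (a : A) (x : X)
    (ha : a ∈ lnwSpan m i n) : m a (i x) ∈ lnwSpan m i (n + 1) := by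
  induction ha using Submodule.span_induction with
  | mem a h =>
    obtain ⟨y, t, ht, rfl⟩ := h
    exact Submodule.subset_span ⟨x, y :: t, by simp [ht], rfl⟩
  | zero => simp
  | add p q _ _ hp hq => simpa using Submodule.add_mem _ hp hq
  | smul r p _ hp => simpa using Submodule.smul_mem _ r hp

theorem letter_mul_mem (m : A →ₗ[K] A →ₗ[K] A) (i : X → A)
    (hm : ∀ a b c, m a (m b c) = m (m a b) c + m (m b a) c) (n : ℕ) (a : A) (x : X)
    (ha : a ∈ lnwSpan m i n) : m (i x) a ∈ lnwSpan m i (n + 1) := by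
  induction ha using Submodule.span_induction with
  | mem a h =>
    obtain ⟨y, t, ht, rfl⟩ := h
    induction t generalizing n y with
    | nil =>
      simp at ht
      subst ht
      exact Submodule.subset_span ⟨y, [x], by simp, rfl⟩
    | cons z t ih =>
      simp at ht
      subst ht
      have h1 := ih t.length z rfl
      rw [lnw, hm]
      apply Submodule.add_mem
      · exact mul_letter_mem m i _ _ y h1
      · exact Submodule.subset_span ⟨y, x :: z :: t, by simp, rfl⟩
  | zero => simp
  | add p q _ _ hp hq => simpa using Submodule.add_mem _ hp hq
  | smul r p _ hp => simpa using Submodule.smul_mem _ r hp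

theorem shl_mem (m : A →ₗ[K] A →ₗ[K] A) (i : X → A)
    (hm : ∀ a b c, m a (m b c) = m (m a b) c + m (m b a) c) (n : ℕ) (a : A) (L : List X)
    (ha : a ∈ lnwSpan m i n) : shl m i a L ∈ lnwSpan m i (n + L.length) := by
  induction L with
  | nil => exact ha
  | cons x L ih =>
    exact Submodule.add_mem _ (mul_letter_mem m i _ _ x ih) (letter_mul_mem m i hm _ _ x ih)

/-- `B (v ⧢ x) = v ⧢ x + B v ⧢ x`. -/
theorem B_sh (m : A →ₗ[K] A →ₗ[K] A) (i : X → A)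
    (hm : ∀ a b c, m a (m b c) = m (m a b) c + m (m b a) c)
    (B : A →ₗ[K] A) (hB0 : ∀ x, B (i x) = i x)
    (hB : ∀ a x, B (m a (i x)) = m a (i x) + m (i x) a) (n : ℕ) (v : A) (x : X)
    (hv : v ∈ lnwSpan m i n) :
    B (m v (i x) + m (i x) v) = (m v (i x) + m (i x) v) + (m (B v) (i x) + m (i x) (B v)) := by
  induction hv using Submodule.span_induction with
  | mem a h =>
    obtain ⟨y, t, ht, rfl⟩ := h
    cases t with
    | nil =>
      simp only [lnw, map_add, hB0, hB]
      abel
    | cons z t =>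
      simp only [lnw, map_add, hB, hm, LinearMap.add_apply]
      abel
  | zero => simp
  | add p q _ _ hp hq =>
    simp only [map_add, LinearMap.add_apply] at hp hq ⊢
    linear_combination (norm := module) hp + hq
  | smul r p _ hp =>
    simp only [map_smul, LinearMap.smul_apply, ← smul_add, hp]

theorem B_shl (m : A →ₗ[K] A →ₗ[K] A) (i : X → A)
    (hm : ∀ a b c, m a (m b c) = m (m a b) c + m (m b a) c)
    (B : A →ₗ[K] A) (hB0 : ∀ x, B (i x) = i x)
    (hB : ∀ a x, B (m a (i x)) = m a (i x) + m (i x) a) (n : ℕ) (v : A) (L : List X)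
    (hv : v ∈ lnwSpan m i n) :
    B (shl m i v L) = (L.length : K) • shl m i v L + shl m i (B v) L := by
  induction L with
  | nil => simp [shl]
  | cons x L ih =>
    rw [shl, B_sh m i hm B hB0 hB _ _ x (shl_mem m i hm n v L hv), ih]
    simp only [shl, map_add, map_smul, LinearMap.add_apply, LinearMap.smul_apply,
      List.length_cons, Nat.cast_add, Nat.cast_one]
    module

theorem shl_sh (m : A →ₗ[K] A →ₗ[K] A) (i : X → A)
    (hm : ∀ a b c, m a (m b c) = m (m a b) c + m (m b a) c) (a : A) (x : X) (L : List X) :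
    shl m i (m a (i x) + m (i x) a) L = shl m i a (x :: L) := by
  induction L with
  | nil => rfl
  | cons y L ih =>
    rw [shl, ih]
    simp only [shl, map_add, hm, LinearMap.add_apply]
    abel

theorem good_words (m : A →ₗ[K] A →ₗ[K] A) (S : Submodule K A) (i : X → A)
    (hm : ∀ a b c, m a (m b c) = m (m a b) c + m (m b a) c)
    (hS : ∀ a ∈ S, ∀ b ∈ S, m a b - m b a ∈ S) (hi : ∀ x, i x ∈ S)
    (B : A →ₗ[K] A) (hB0 : ∀ x, B (i x) = i x)
    (hB : ∀ a x, B (m a (i x)) = m a (i x) + m (i x) a) (n : ℕ) :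
    lnwSpan m i n ≤ goodSub m S := by
  induction n with
  | zero =>
    refine Submodule.span_le.2 ?_
    rintro _ ⟨x, t, ht, rfl⟩
    obtain rfl := List.length_eq_zero_iff.1 ht
    exact good_of_mem m S hm hS _ (hi x)
  | succ n ihn =>
    have key : ∀ v ∈ lnwSpan m i (n + 1), v + B v ∈ goodSub m S := by
      intro v hv
      induction hv using Submodule.span_induction with
      | mem a h =>
        obtain ⟨y, t, ht, rfl⟩ := h
        cases t with
        | nil => simp at ht
        | cons z t =>
          simp at ht
          rw [lnw, hB]
          exact good_step m S hm hS _ _ (ihn (Submodule.subset_span ⟨z, t, ht, rfl⟩)) (hi y)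
      | zero => simp
      | add p q _ _ hp hq =>
        have := Submodule.add_mem _ hp hq
        convert this using 1
        rw [map_add]; abel
      | smul r p _ hp => simpa using Submodule.smul_mem _ r hp
    have main : ∀ (t : List X) (x : X) (L : List X), t.length + L.length = n + 1 →
        shl m i (lnw m i x t) L ∈ goodSub m S := by
      intro t
      induction t with
      | nil =>
        intro x L hL
        have h0 : lnw m i x [] ∈ lnwSpan m i 0 := Submodule.subset_span ⟨x, [], rfl, rfl⟩
        have h1 := key _ (by have := shl_mem m i hm 0 _ L h0; simpa [← hL] using this)
        rw [B_shl m i hm B hB0 hB 0 _ L h0] at h1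
        have h2 : B (lnw m i x []) = lnw m i x [] := hB0 x
        rw [h2] at h1
        have hne : ((L.length : K) + 2) ≠ 0 := by exact_mod_cast Nat.succ_ne_zero (L.length + 1)
        have h3 := Submodule.smul_mem _ ((L.length : K) + 2)⁻¹ h1
        convert h3 using 1
        rw [eq_inv_smul_iff₀ hne]
        module
      | cons y t ih =>
        intro x L hL
        have h0 : lnw m i x (y :: t) ∈ lnwSpan m i (t.length + 1) :=
          Submodule.subset_span ⟨x, y :: t, rfl, rfl⟩
        have h1 := key _ (by
          have := shl_mem m i hm _ _ L h0
          rw [← hL]; simpa using this)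
        rw [B_shl m i hm B hB0 hB _ _ L h0] at h1
        have h2 : shl m i (B (lnw m i x (y :: t))) L ∈ goodSub m S := by
          rw [lnw, hB, shl_sh m i hm]
          apply ih
          simp at hL ⊢; omega
        have hne : ((L.length : K) + 1) ≠ 0 := by exact_mod_cast Nat.succ_ne_zero L.length
        have h3 := Submodule.smul_mem _ ((L.length : K) + 1)⁻¹ (Submodule.sub_mem _ h1 h2)
        convert h3 using 1
        rw [eq_inv_smul_iff₀ hne]
        module
    refine Submodule.span_le.2 ?_
    rintro _ ⟨x, t, ht, rfl⟩
    exact main t x [] (by simpa using ht)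

end Abstract

section Concrete

variable {K X : Type} [Field K]

/-- Shuffle of two words as an element of the space on all words. -/
noncomputable def shW (u v : List X) : List X →₀ K :=
  ((shuffles u v).map fun w => Finsupp.single w (1 : K)).sum

/-- Linear extension of a map on words. -/
noncomputable def mapL (h : List X → List X) : (List X →₀ K) →ₗ[K] (List X →₀ K) :=
  Finsupp.lmapDomain K K h

/-- Projection to `Zin`. -/
noncomputable def toZin : (List X →₀ K) →ₗ[K] Zin K X :=
  Finsupp.linearCombination K ofList

/-- Bilinear shuffle. -/
noncomputable def shB : (List X →₀ K) →ₗ[K] (List X →₀ K) →ₗ[K] (List X →₀ K) :=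
  Finsupp.linearCombination K fun u => Finsupp.linearCombination K fun v => shW u v

/-- Basis vector. -/
noncomputable def eW (l : List X) : List X →₀ K := Finsupp.single l 1

theorem mapL_e (h : List X → List X) (l : List X) : mapL h (eW l : List X →₀ K) = eW (h l) := by
  simp [mapL, eW]

theorem toZin_e (l : List X) : toZin (eW l : List X →₀ K) = ofList l := by
  simp [toZin, eW]

theorem shB_e (u v : List X) : shB (eW u : List X →₀ K) (eW v) = shW u v := by
  simp [shB, eW]

theorem mapL_sum (h : List X → List X) (L : List (List X)) :
    ((L.map h).map fun w => Finsupp.single w (1 : K)).sum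
      = mapL h ((L.map fun w => Finsupp.single w (1 : K)).sum) := by
  rw [map_list_sum]
  simp [mapL, Function.comp_def]

theorem toZin_sum (L : List (List X)) :
    (ofLists L : Zin K X) = toZin ((L.map fun w => Finsupp.single w (1 : K)).sum) := by
  rw [map_list_sum]
  simp [toZin, ofLists, Function.comp_def]

theorem shW_nil_left (v : List X) : (shW [] v : List X →₀ K) = eW v := by
  simp [shW, shuffles, eW]

theorem shW_nil_right (v : List X) : (shW v [] : List X →₀ K) = eW v := by
  cases v <;> simp [shW, shuffles, eW]

theorem shW_cons (a b : X) (u v : List X) : (shW (a :: u) (b :: v) : List X →₀ K)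
    = mapL (List.cons a) (shW u (b :: v)) + mapL (List.cons b) (shW (a :: u) v) := by
  rw [shW, shuffles, List.map_append, List.sum_append, mapL_sum, mapL_sum]
  rfl

theorem e_cons (a : X) (u : List X) : (eW (a :: u) : List X →₀ K) = mapL (List.cons a) (eW u) := by
  rw [mapL_e]

theorem induct1 {M : Type} [AddCommGroup M] [Module K M] (F G : (List X →₀ K) →ₗ[K] M)
    (h : ∀ l, F (eW l) = G (eW l)) (f : List X →₀ K) : F f = G f := by
  have : F = G := Finsupp.lhom_ext' fun l => LinearMap.ext_ring (h l)
  rw [this]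

theorem induct2 {M : Type} [AddCommGroup M] [Module K M]
    (F G : (List X →₀ K) →ₗ[K] (List X →₀ K) →ₗ[K] M)
    (h : ∀ l k, F (eW l) (eW k) = G (eW l) (eW k)) (f g : List X →₀ K) : F f g = G f g := by
  have : F f = G f := induct1 F G (fun l => LinearMap.ext (induct1 _ _ (h l))) f
  rw [this]

theorem shB_cons (a b : X) (f g : List X →₀ K) :
    shB (mapL (List.cons a) f) (mapL (List.cons b) g)
      = mapL (List.cons a) (shB f (mapL (List.cons b) g))
        + mapL (List.cons b) (shB (mapL (List.cons a) f) g) := by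
  let ca : (List X →₀ K) →ₗ[K] (List X →₀ K) := mapL (List.cons a)
  let cb : (List X →₀ K) →ₗ[K] (List X →₀ K) := mapL (List.cons b)
  refine induct2 (shB.compl₁₂ ca cb)
    ((shB.compl₂ cb).compr₂ ca + (shB.comp ca).compr₂ cb) ?_ f g
  intro l k
  simp [ca, cb, LinearMap.compl₁₂_apply, mapL_e, shB_e, shW_cons]

theorem shB_nil_left (f : List X →₀ K) : shB (eW []) f = f := by
  refine induct1 (shB (eW [])) LinearMap.id ?_ f
  intro l; simp [shB_e, shW_nil_left]

theorem shB_nil_right (f : List X →₀ K) : shB f (eW []) = f := by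
  refine induct1 (shB.flip (eW [])) LinearMap.id ?_ f
  intro l; simp [shB_e, shW_nil_right]

theorem shW_assoc (n : ℕ) (u v w : List X) (h : u.length + v.length + w.length = n) :
    shB (shW u v : List X →₀ K) (eW w) = shB (eW u) (shW v w) := by
  induction n generalizing u v w with
  | zero =>
    have hu : u = [] := List.length_eq_zero_iff.1 (by omega)
    subst hu
    rw [shW_nil_left, shB_e, shB_nil_left]
  | succ n ih =>
    rcases u with _ | ⟨a, u⟩
    · rw [shW_nil_left, shB_e, shB_nil_left]
    rcases v with _ | ⟨b, v⟩
    · rw [shW_nil_left, shW_nil_right]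
    rcases w with _ | ⟨c, w⟩
    · rw [shW_nil_right, shB_nil_right, shB_e]
    simp only [List.length_cons] at h
    have i1 := ih u (b :: v) (c :: w) (by simp; omega)
    have i2 := ih (a :: u) v (c :: w) (by simp; omega)
    have i3 := ih (a :: u) (b :: v) w (by simp; omega)
    have l1 : shB (shW (a :: u) (b :: v) : List X →₀ K) (eW (c :: w))
        = mapL (List.cons a) (shB (shW u (b :: v)) (eW (c :: w)))
        + mapL (List.cons b) (shB (shW (a :: u) v) (eW (c :: w)))
        + mapL (List.cons c) (shB (shW (a :: u) (b :: v)) (eW w)) := by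
      simp only [shW_cons a b, e_cons c, map_add, LinearMap.add_apply, shB_cons]
      abel
    have l2 : shB (eW (a :: u) : List X →₀ K) (shW (b :: v) (c :: w))
        = mapL (List.cons a) (shB (eW u) (shW (b :: v) (c :: w)))
        + mapL (List.cons b) (shB (eW (a :: u)) (shW v (c :: w)))
        + mapL (List.cons c) (shB (eW (a :: u)) (shW (b :: v) w)) := by
      simp only [shW_cons b c, e_cons a, map_add, LinearMap.add_apply, shB_cons]
      abel
    rw [l1, l2, i1, i2, i3]

theorem shW_comm (n : ℕ) (u v : List X) (h : u.length + v.length = n) :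
    (shW u v : List X →₀ K) = shW v u := by
  induction n generalizing u v with
  | zero =>
    have hu : u = [] := List.length_eq_zero_iff.1 (by omega)
    subst hu
    rw [shW_nil_left, shW_nil_right]
  | succ n ih =>
    rcases u with _ | ⟨a, u⟩
    · rw [shW_nil_left, shW_nil_right]
    rcases v with _ | ⟨b, v⟩
    · rw [shW_nil_left, shW_nil_right]
    simp only [List.length_cons] at h
    rw [shW_cons, shW_cons, ih u (b :: v) (by simp; omega), ih (a :: u) v (by simp; omega),
      add_comm]

/-- Append a letter. -/
def snocW (s : X) (l : List X) : List X := l ++ [s]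

theorem snoc_cons (a s : X) (f : List X →₀ K) :
    mapL (List.cons a) (mapL (snocW s) f) = mapL (snocW s) (mapL (List.cons a) f) := by
  refine induct1 ((mapL (List.cons a)).comp (mapL (snocW s)))
    ((mapL (snocW s)).comp (mapL (List.cons a))) ?_ f
  intro l; simp [mapL_e, snocW]

theorem shW_snoc (n : ℕ) (u v : List X) (s t : X) (h : u.length + v.length = n) :
    (shW (u ++ [s]) (v ++ [t]) : List X →₀ K)
      = mapL (snocW s) (shW u (v ++ [t])) + mapL (snocW t) (shW (u ++ [s]) v) := by
  induction n generalizing u v with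
  | zero =>
    have hu : u = [] := List.length_eq_zero_iff.1 (by omega)
    have hv : v = [] := List.length_eq_zero_iff.1 (by omega)
    subst hu hv
    simp [shW_cons, shW_nil_left, shW_nil_right, mapL_e, snocW]
    abel
  | succ n ih =>
    rcases u with _ | ⟨a, u⟩
    · rcases v with _ | ⟨b, v⟩
      · simp at h
      · have i1 := ih [] v (by simpa using h)
        simp only [List.nil_append, List.cons_append] at i1 ⊢
        rw [shW_cons, shW_cons, i1]
        simp only [shW_nil_left, map_add, mapL_e, snoc_cons, snocW, List.cons_append]
        abel
    · rcases v with _ | ⟨b, v⟩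
      · have i1 := ih u [] (by simpa using h)
        simp only [List.nil_append, List.cons_append] at i1 ⊢
        rw [shW_cons, shW_cons, i1]
        simp only [shW_nil_right, map_add, mapL_e, snoc_cons, snocW, List.cons_append]
        abel
      · simp only [List.length_cons] at h
        have i1 := ih u (b :: v) (by simp; omega)
        have i2 := ih (a :: u) v (by simp; omega)
        simp only [List.cons_append] at i1 i2 ⊢
        rw [shW_cons, i1, i2, shW_cons a b u (v ++ [t]), shW_cons a b (u ++ [s]) v]
        simp only [map_add, snoc_cons]
        abel

/-- The Zinbiel product as a bilinear map. -/
noncomputable def zB : Zin K X →ₗ[K] Zin K X →ₗ[K] Zin K X :=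
  Finsupp.linearCombination K fun u : Word X => Finsupp.linearCombination K fun w : Word X =>
    ofLists ((shuffles u.1 w.1.dropLast).map fun s => s ++ [w.1.getLast w.2])

theorem zB_eq (f g : Zin K X) : zB f g = zmul f g := by
  simp only [zB, zmul, Finsupp.linearCombination_apply, Finsupp.sum, LinearMap.sum_apply,
    LinearMap.smul_apply, Finset.smul_sum, smul_smul]

theorem ofList_single (l : List X) (hl : l ≠ []) :
    ∃ w : Word X, w.1 = l ∧ (ofList l : Zin K X) = Finsupp.single w 1 := by
  cases l with
  | nil => exact absurd rfl hl
  | cons a t => exact ⟨⟨a :: t, hl⟩, rfl, rfl⟩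

theorem zB_single (u w : Word X) :
    zB (Finsupp.single u 1 : Zin K X) (Finsupp.single w 1)
      = ofLists ((shuffles u.1 w.1.dropLast).map fun s => s ++ [w.1.getLast w.2]) := by
  rw [zB, Finsupp.linearCombination_single, one_smul, Finsupp.linearCombination_single, one_smul]

theorem Word.last_eq (w : Word X) (l : List X) (y : X) (h : w.1 = l ++ [y]) :
    w.1.dropLast = l ∧ w.1.getLast w.2 = y := by
  obtain ⟨w, hw⟩ := w
  change w = _ at h
  subst h
  exact ⟨by simp, by simp⟩

theorem zB_ofList (u w : List X) (y : X) (hu : u ≠ []) :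
    zB (ofList u : Zin K X) (ofList (w ++ [y])) = toZin (mapL (snocW y) (shW u w)) := by
  obtain ⟨U, hU, hU2⟩ := ofList_single (K := K) u hu
  obtain ⟨W, hW, hW2⟩ := ofList_single (K := K) (w ++ [y]) (by simp)
  obtain ⟨e1, e2⟩ := Word.last_eq W w y hW
  rw [hU2, hW2, zB_single, e1, e2, hU, toZin_sum, mapL_sum (fun s => s ++ [y])]
  rfl

theorem zB_snoc_right (u : List X) (hu : u ≠ []) (y : X) (f : List X →₀ K) :
    zB (ofList u) (toZin (mapL (snocW y) f)) = toZin (mapL (snocW y) (shB (eW u) f)) := by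
  refine induct1 ((zB (ofList u)).comp (toZin.comp (mapL (snocW y))))
    (toZin.comp ((mapL (snocW y)).comp (shB (eW u)))) ?_ f
  intro l
  simp only [LinearMap.comp_apply, mapL_e, toZin_e, shB_e, snocW]
  rw [zB_ofList u l y hu]

theorem zB_snoc_left (w : List X) (t z : X) (f : List X →₀ K) :
    zB (toZin (mapL (snocW t) f)) (ofList (w ++ [z]))
      = toZin (mapL (snocW z) (shB (mapL (snocW t) f) (eW w))) := by
  refine induct1 ((zB.flip (ofList (w ++ [z]))).comp (toZin.comp (mapL (snocW t))))
    (toZin.comp ((mapL (snocW z)).comp ((shB.flip (eW w)).comp (mapL (snocW t))))) ?_ f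
  intro l
  simp only [LinearMap.comp_apply, mapL_e, toZin_e, LinearMap.flip_apply, shB_e, snocW]
  rw [zB_ofList _ w z (by simp)]

theorem zind {M : Type} [AddCommGroup M] [Module K M] (F G : Zin K X →ₗ[K] M)
    (h : ∀ (l : List X) (x : X), F (ofList (l ++ [x])) = G (ofList (l ++ [x]))) : F = G := by
  refine Finsupp.lhom_ext' fun w => LinearMap.ext_ring ?_
  obtain ⟨l, hl⟩ := w
  have h1 := h l.dropLast (l.getLast hl)
  rw [List.dropLast_append_getLast hl] at h1
  cases l with
  | nil => exact absurd rfl hl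
  | cons a t => exact h1

theorem zB_zinbiel_words (u v w : List X) (s t z : X) :
    zB (ofList (u ++ [s]) : Zin K X) (zB (ofList (v ++ [t])) (ofList (w ++ [z])))
      = zB (zB (ofList (u ++ [s])) (ofList (v ++ [t]))) (ofList (w ++ [z]))
      + zB (zB (ofList (v ++ [t])) (ofList (u ++ [s]))) (ofList (w ++ [z])) := by
  rw [zB_ofList (v ++ [t]) w z (by simp), zB_snoc_right _ (by simp),
    zB_ofList (u ++ [s]) v t (by simp), zB_ofList (v ++ [t]) u s (by simp),
    zB_snoc_left, zB_snoc_left, ← shW_assoc _ _ _ _ rfl, shW_snoc _ u v s t rfl,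
    shW_comm _ (v ++ [t]) u rfl, ← map_add, ← map_add, ← LinearMap.add_apply, ← map_add]
  rw [add_comm]

theorem zB_zinbiel (a b c : Zin K X) : zB a (zB b c) = zB (zB a b) c + zB (zB b a) c := by
  -- one variable at a time
  have h1 : ∀ (u v : List X) (s t : X) (c : Zin K X),
      zB (ofList (u ++ [s]) : Zin K X) (zB (ofList (v ++ [t])) c)
      = zB (zB (ofList (u ++ [s])) (ofList (v ++ [t]))) c
      + zB (zB (ofList (v ++ [t])) (ofList (u ++ [s]))) c := by
    intro u v s t c
    exact LinearMap.congr_fun (zind ((zB (ofList (u ++ [s]))).comp (zB (ofList (v ++ [t]))))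
      (zB (zB (ofList (u ++ [s])) (ofList (v ++ [t])))
        + zB (zB (ofList (v ++ [t])) (ofList (u ++ [s]))))
      (fun w z => zB_zinbiel_words u v w s t z)) c
  have h2 : ∀ (u : List X) (s : X) (b c : Zin K X),
      zB (ofList (u ++ [s]) : Zin K X) (zB b c)
      = zB (zB (ofList (u ++ [s])) b) c + zB (zB b (ofList (u ++ [s]))) c := by
    intro u s b c
    exact LinearMap.congr_fun (zind ((zB (ofList (u ++ [s]))).comp (zB.flip c))
      ((zB.flip c).comp (zB (ofList (u ++ [s])))
        + (zB.flip c).comp (zB.flip (ofList (u ++ [s]))))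
      (fun v t => h1 u v s t c)) b
  exact LinearMap.congr_fun (zind (zB.flip (zB b c))
      ((zB.flip c).comp (zB.flip b) + (zB.flip c).comp (zB b))
      (fun u s => h2 u s b c)) a

/-- The operator `B (u x) = u ⧢ x`. -/
noncomputable def Bop : Zin K X →ₗ[K] Zin K X :=
  Finsupp.linearCombination K fun w : Word X =>
    toZin (shW w.1.dropLast [w.1.getLast w.2])

theorem Bop_ofList (u : List X) (x : X) :
    Bop (ofList (u ++ [x]) : Zin K X) = toZin (shW u [x]) := by
  obtain ⟨W, hW, hW2⟩ := ofList_single (K := K) (u ++ [x]) (by simp)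
  obtain ⟨e1, e2⟩ := Word.last_eq W u x hW
  rw [hW2, Bop, Finsupp.linearCombination_single, one_smul, e1, e2]

theorem ofLetter_eq (x : X) : (ofLetter x : Zin K X) = ofList ([] ++ [x]) := rfl

theorem zB_letter (u : List X) (hu : u ≠ []) (x : X) :
    zB (ofList u : Zin K X) (ofLetter x) = ofList (u ++ [x]) := by
  rw [ofLetter_eq, zB_ofList u [] x hu, shW_nil_right, mapL_e, toZin_e]
  rfl

theorem Bop_letter (x : X) : Bop (ofLetter x : Zin K X) = ofLetter x := by
  rw [ofLetter_eq, Bop_ofList, shW_nil_left, toZin_e]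
  rfl

theorem Bop_mul (a : Zin K X) (x : X) :
    Bop (zB a (ofLetter x)) = zB a (ofLetter x) + zB (ofLetter x) a := by
  refine LinearMap.congr_fun (zind (Bop.comp (zB.flip (ofLetter x)))
    (zB.flip (ofLetter x) + zB (ofLetter x)) ?_) a
  intro u s
  simp only [LinearMap.comp_apply, LinearMap.add_apply, LinearMap.flip_apply]
  have h1 := shW_snoc (K := K) _ u [] s x rfl
  rw [shW_nil_right, mapL_e] at h1
  simp only [List.nil_append, snocW] at h1
  rw [zB_letter _ (by simp), Bop_ofList, ofLetter_eq,
    zB_ofList ([] ++ [x]) u s (by simp), shW_comm _ ([] ++ [x]) u rfl, h1, map_add, toZin_e,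
    add_comm]
  rfl

theorem lnw_rev (t : List X) (x : X) :
    lnw (zB (K := K)) ofLetter x t = ofList (t.reverse ++ [x]) := by
  induction t generalizing x with
  | nil => rfl
  | cons y t ih =>
    rw [lnw, ih, zB_letter _ (by simp)]
    simp

/-- `ST(X)` as a submodule. -/
def stSub : Submodule K (Zin K X) where
  carrier := {f | InST f}
  zero_mem' := InST.zero
  add_mem' := fun h1 h2 => InST.add h1 h2
  smul_mem' := fun c _ h => InST.smul c h

theorem good_all [CharZero K] (a : Zin K X) : a ∈ goodSub (zB (K := K)) stSub := by
  have hw : ∀ (l : List X) (x : X),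
      (ofList (l ++ [x]) : Zin K X) ∈ goodSub (zB (K := K)) stSub := by
    intro l x
    have hmem : (ofList (l ++ [x]) : Zin K X) ∈ lnwSpan (zB (K := K)) ofLetter l.length :=
      Submodule.subset_span ⟨x, l.reverse, List.length_reverse, by
        rw [lnw_rev, List.reverse_reverse]⟩
    refine good_words (zB (K := K) (X := X)) stSub ofLetter zB_zinbiel ?_
      (fun x => InST.letter x) Bop Bop_letter Bop_mul l.length hmem
    intro a ha b hb
    rw [zB_eq, zB_eq]
    exact InST.bracket ha hb
  have h := zind (Submodule.mkQ (goodSub (zB (K := K)) (stSub (X := X)))) 0 (by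
    intro l x
    simpa using hw l x)
  have h2 := LinearMap.congr_fun h a
  simpa using h2

end Concrete

/-- If `b` and `c` are Lie elements of `Zin(X)` and `a ∈ Zin(X)`, then
`(a∘b)∘c − (a∘c)∘b` and `b∘c − c∘b` are Lie elements. -/
theorem abc_sub_acb_is_lie (K X : Type) [Field K] [CharZero K] (a f g : Zin K X)
    (hf : InST f) (hg : InST g) :
    InST (zmul (zmul a f) g - zmul (zmul a g) f) ∧ InST (zmul f g - zmul g f) := by
  refine ⟨?_, InST.bracket hf hg⟩
  have h := good_all a f hf g hg
  simp only [zB_eq] at h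
  exact h
end

section
/- The free Tortkara algebra T({x,y}) on two generators is special: the natural homomorphism T({x,y}) → ST({x,y}) sending x ↦ x and y ↦ y is an isomorphism of algebras; in particular T({x,y}) embeds into A^(−) for a Zinbiel algebra A. -/
/-- A bundled Zinbiel algebra over `K`: a nonunital nonassociative `K`-algebra whose
product satisfies the Zinbiel identity `a∘(b∘c) = (a∘b + b∘a)∘c`. -/
structure ZinbielAlgebra (K : Type) [Field K] : Type 1 where
  carrier : Type
  [ring : NonUnitalNonAssocRing carrier]
  [mod : Module K carrier]
  [smulComm : SMulCommClass K carrier carrier]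
  [tower : IsScalarTower K carrier carrier]
  zinbiel : ∀ a b c : carrier, a * (b * c) = (a * b + b * a) * c

attribute [instance] ZinbielAlgebra.ring ZinbielAlgebra.mod
  ZinbielAlgebra.smulComm ZinbielAlgebra.tower

/-- A bundled Tortkara algebra over `K`: an anticommutative nonunital nonassociative
`K`-algebra satisfying `(ab)(cb) = J(a,b,c)b`, where `J(a,b,c) = (ab)c+(bc)a+(ca)b`. -/
structure TortkaraAlgebra (K : Type) [Field K] : Type 1 where
  carrier : Type
  [ring : NonUnitalNonAssocRing carrier]
  [mod : Module K carrier]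
  [smulComm : SMulCommClass K carrier carrier]
  [tower : IsScalarTower K carrier carrier]
  anticomm : ∀ a b : carrier, a * b = -(b * a)
  tortkara : ∀ a b c : carrier,
    (a * b) * (c * b) = ((a * b) * c + (b * c) * a + (c * a) * b) * b

attribute [instance] TortkaraAlgebra.ring TortkaraAlgebra.mod
  TortkaraAlgebra.smulComm TortkaraAlgebra.tower

section alg
variable {K A : Type} [Field K] [NonUnitalNonAssocRing A] [Module K A]
  [SMulCommClass K A A] [IsScalarTower K A A]

/-- span of left-normed words of degree `n+1`. -/
def VV (K : Type) {A : Type} [Field K] [NonUnitalNonAssocRing A] [Module K A]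
    [SMulCommClass K A A] [IsScalarTower K A A] (x y : A) : ℕ → Submodule K A
  | 0 => Submodule.span K {x, y}
  | n + 1 => (VV K x y n).map (LinearMap.mulRight K x) ⊔ (VV K x y n).map (LinearMap.mulRight K y)

theorem mem_VV_zero {x y u : A} : u ∈ VV K x y 0 ↔ ∃ α β : K, α • x + β • y = u := by
  simp [VV, Submodule.mem_span_pair]

theorem mem_VV_succ {x y u : A} {n : ℕ} :
    u ∈ VV K x y (n+1) ↔ ∃ a ∈ VV K x y n, ∃ b ∈ VV K x y n, a * x + b * y = u := by
  simp [VV, Submodule.mem_sup]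

theorem VV_mul_x {x y u : A} {n : ℕ} (h : u ∈ VV K x y n) : u * x ∈ VV K x y (n+1) :=
  mem_VV_succ.2 ⟨u, h, 0, zero_mem _, by simp⟩

theorem VV_mul_y {x y u : A} {n : ℕ} (h : u ∈ VV K x y n) : u * y ∈ VV K x y (n+1) :=
  mem_VV_succ.2 ⟨0, zero_mem _, u, h, by simp⟩

theorem VV_mul_zero {x y u v : A} {n : ℕ} (h : u ∈ VV K x y n) (hv : v ∈ VV K x y 0) :
    u * v ∈ VV K x y (n+1) := by
  obtain ⟨α, β, rfl⟩ := mem_VV_zero.1 hv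
  rw [mul_add, mul_smul_comm, mul_smul_comm]
  exact add_mem (Submodule.smul_mem _ _ (VV_mul_x h)) (Submodule.smul_mem _ _ (VV_mul_y h))

theorem VV_x {x y : A} : x ∈ VV K x y 0 := Submodule.subset_span (by simp)
theorem VV_y {x y : A} : y ∈ VV K x y 0 := Submodule.subset_span (by simp)

theorem tort_lin {A : Type} [NonUnitalNonAssocRing A]
    (tort : ∀ a b c : A, (a * b) * (c * b) = ((a * b) * c + (b * c) * a + (c * a) * b) * b)
    (a b c d : A) : (a * b) * (c * d) + (a * d) * (c * b) =
    ((a * b) * c + (b * c) * a + (c * a) * b) * d + ((a * d) * c + (d * c) * a + (c * a) * d) * b := by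
  have h := tort a (b + d) c
  have h1 := tort a b c
  have h2 := tort a d c
  simp only [mul_add, add_mul] at h h1 h2 ⊢
  rw [h1, h2] at h
  rw [← sub_eq_zero] at h ⊢
  rw [← h]; abel

theorem VV_mul (anti : ∀ a b : A, a * b = -(b * a))
    (tort : ∀ a b c : A, (a * b) * (c * b) = ((a * b) * c + (b * c) * a + (c * a) * b) * b)
    (two : ∀ a : A, a = -a → a = 0)
    (x y : A) (N : ℕ) : ∀ m n, m + n = N → ∀ u ∈ VV K x y m, ∀ v ∈ VV K x y n,
    u * v ∈ VV K x y (N + 1) := by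
  induction N using Nat.strong_induction_on with
  | _ N IH =>
  have IH' : ∀ {m n k : ℕ}, m + n < N → m + n + 1 = k → ∀ {u v : A}, u ∈ VV K x y m →
      v ∈ VV K x y n → u * v ∈ VV K x y k := by
    rintro m n k h rfl u v hu hv
    exact IH _ h m n rfl u hu v hv
  have hJ : ∀ {i j k : ℕ}, i + j + k + 2 = N → ∀ {a b c : A}, a ∈ VV K x y i → b ∈ VV K x y j →
      c ∈ VV K x y k → (a * b) * c + (b * c) * a + (c * a) * b ∈ VV K x y N := by
    intro i j k h a b c ha hb hc
    have l1 := IH' (k := N) (by omega) (by omega) (IH' (by omega) rfl ha hb) hc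
    have l2 := IH' (k := N) (by omega) (by omega) (IH' (by omega) rfl hb hc) ha
    have l3 := IH' (k := N) (by omega) (by omega) (IH' (by omega) rfl hc ha) hb
    exact add_mem (add_mem l1 l2) l3
  -- same letter
  have hxx : ∀ {i j : ℕ}, i + j + 2 = N → ∀ {a c e : A}, a ∈ VV K x y i → c ∈ VV K x y j →
      e ∈ VV K x y 0 → (a * e) * (c * e) ∈ VV K x y (N+1) := by
    intro i j h a c e ha hc he
    rw [tort]
    exact VV_mul_zero (hJ (by omega) ha he hc) he
  have hS : ∀ {i j : ℕ}, i + j + 2 = N → ∀ {a c : A}, a ∈ VV K x y i → c ∈ VV K x y j →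
      (a * x) * (c * y) + (a * y) * (c * x) ∈ VV K x y (N+1) := by
    intro i j h a c ha hc
    rw [tort_lin tort]
    exact add_mem (VV_mul_zero (hJ (by omega) ha VV_x hc) VV_y)
      (VV_mul_zero (hJ (by omega) ha VV_y hc) VV_x)
  have hsw : ∀ {a b : A}, a * b ∈ VV K x y (N+1) → b * a ∈ VV K x y (N+1) := by
    intro a b h
    rw [anti]; exact neg_mem h
  -- from the mixed products to everything
  have hG : ∀ i j : ℕ, i + j + 2 = N → (∀ a ∈ VV K x y i, ∀ c ∈ VV K x y j,
      (a * x) * (c * y) ∈ VV K x y (N+1)) → ∀ u ∈ VV K x y (i+1), ∀ v ∈ VV K x y (j+1),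
      u * v ∈ VV K x y (N+1) := by
    intro i j h H u hu v hv
    obtain ⟨a, ha, b, hb, rfl⟩ := mem_VV_succ.1 hu
    obtain ⟨c, hc, d, hd, rfl⟩ := mem_VV_succ.1 hv
    have e1 := hxx h ha hc VV_x
    have e2 := hxx h hb hd VV_y
    have e3 := H a ha d hd
    have e4 : (b * y) * (c * x) ∈ VV K x y (N+1) := by
      have := sub_mem (hS h hb hc) (H b hb c hc)
      simpa using this
    rw [add_mul, mul_add, mul_add]
    exact add_mem (add_mem e1 e3) (add_mem e4 e2)
  have hsq : ∀ a : A, a * a = 0 := fun a => two _ (anti a a)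
  have main : ∀ i j : ℕ, i + j + 2 = N → ∀ u ∈ VV K x y (i+1), ∀ v ∈ VV K x y (j+1),
      u * v ∈ VV K x y (N+1) := by
    intro i
    induction i with
    | zero =>
      intro j h
      apply hG 0 j h
      intro a ha c hc
      obtain ⟨α, β, rfl⟩ := mem_VV_zero.1 ha
      have := hS h (VV_y (K := K) (x := x) (y := y)) hc
      rw [hsq, zero_mul, add_zero] at this
      simp only [add_mul, smul_mul_assoc, hsq, smul_zero, zero_mul, zero_add]
      exact Submodule.smul_mem _ _ this
    | succ i ih =>
      have h0 : ∀ j : ℕ, 0 + j + 2 = N → ∀ u ∈ VV K x y (0+1), ∀ v ∈ VV K x y (j+1),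
          u * v ∈ VV K x y (N+1) := by
        intro j h
        apply hG 0 j h
        intro a ha c hc
        obtain ⟨α, β, rfl⟩ := mem_VV_zero.1 ha
        have := hS h (VV_y (K := K) (x := x) (y := y)) hc
        rw [hsq, zero_mul, add_zero] at this
        simp only [add_mul, smul_mul_assoc, hsq, smul_zero, zero_mul, zero_add]
        exact Submodule.smul_mem _ _ this
      intro j h
      apply hG _ j h
      intro a ha c hc
      have key := tort_lin tort x a c y
      have k1 : (x * a * c + a * c * x + c * x * a) * y ∈ VV K x y (N+1) :=
        VV_mul_zero (hJ (by omega) VV_x ha hc) VV_y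
      have k2 : (x * y) * (c * a) ∈ VV K x y (N+1) := by
        apply h0 (i + j + 1) (by omega) _ (VV_mul_y VV_x)
        exact IH' (by omega) (by omega) hc ha
      have k3 : (x * y * c + y * c * x + c * x * y) * a ∈ VV K x y (N+1) := by
        apply hsw
        apply ih (j + 1) (by omega) _ ha
        refine add_mem (add_mem ?_ ?_) ?_
        · exact IH' (m := 1) (by omega) (by omega) (VV_mul_y VV_x) hc
        · exact IH' (n := 0) (m := j + 1) (by omega) (by omega) (IH' (by omega) (by omega) VV_y hc) VV_x
        · exact IH' (n := 0) (m := j + 1) (by omega) (by omega) (VV_mul_x hc) VV_y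
      have k4 : a * x * (c * y) = -((x * a) * (c * y)) := by
        rw [anti a x, neg_mul]
      rw [k4, eq_sub_of_add_eq key]
      exact neg_mem (sub_mem (add_mem k1 k3) k2)
  intro m n h u hu v hv
  rcases n with _ | n
  · obtain rfl : m = N := by omega
    exact VV_mul_zero hu hv
  rcases m with _ | m
  · obtain rfl : n + 1 = N := by omega
    exact hsw (VV_mul_zero hv hu)
  exact main m n (by omega) u hu v hv
end alg
section words
variable {K : Type} [Field K]

abbrev FF (K : Type) [Field K] : Type := List (Fin 2) →₀ K

noncomputable def wd (K : Type) [Field K] (l : List (Fin 2)) : FF K := Finsupp.single l 1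

noncomputable def wlin {M : Type} [AddCommGroup M] [Module K M] (f : List (Fin 2) → M) : FF K →ₗ[K] M :=
  Finsupp.linearCombination K f

@[simp] theorem wlin_wd {M : Type} [AddCommGroup M] [Module K M] (f : List (Fin 2) → M) (l) :
    wlin f (wd K l) = f l := by simp [wlin, wd]

theorem wext {M : Type} [AddCommGroup M] [Module K M] {f g : FF K →ₗ[K] M}
    (h : ∀ l, f (wd K l) = g (wd K l)) : f = g := by
  apply Finsupp.lhom_ext'
  intro l
  ext
  exact h l

theorem wext_apply {M : Type} [AddCommGroup M] [Module K M] (f g : FF K →ₗ[K] M)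
    (h : ∀ l, f (wd K l) = g (wd K l)) (a : FF K) : f a = g a := by rw [wext h]

noncomputable def eps : FF K →ₗ[K] K := wlin fun l => if l = [] then 1 else 0
noncomputable def app (c : Fin 2) : FF K →ₗ[K] FF K := wlin fun l => wd K (l ++ [c])
noncomputable def pre (c : Fin 2) : FF K →ₗ[K] FF K := wlin fun l => wd K (c :: l)
noncomputable def DD (c : Fin 2) : FF K →ₗ[K] FF K :=
  wlin fun l => if l.getLast? = some c then wd K l.dropLast else 0
noncomputable def sumw (ls : List (List (Fin 2))) : FF K := (ls.map (wd K)).sum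
noncomputable def sh : FF K →ₗ[K] FF K →ₗ[K] FF K :=
  wlin fun u => wlin fun v => sumw (shuffles u v)

@[simp] theorem eps_nil : eps (wd K []) = 1 := by simp [eps]
@[simp] theorem eps_cons (a l) : eps (wd K (a :: l)) = 0 := by simp [eps]
@[simp] theorem eps_app (c) (f : FF K) : eps (app c f) = 0 :=
  wext_apply (eps ∘ₗ app c) 0 (by intro l; simp [eps, app]) f
@[simp] theorem eps_pre (c) (f : FF K) : eps (pre c f) = 0 :=
  wext_apply (eps ∘ₗ pre c) 0 (by intro l; simp [eps, pre]) f
theorem app_wd (c l) : app c (wd K l) = wd K (l ++ [c]) := by simp [app]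
theorem pre_wd (c l) : pre c (wd K l) = wd K (c :: l) := by simp [pre]
@[simp] theorem DD_nil (c) : DD c (wd K []) = 0 := by simp [DD]
@[simp] theorem DD_app (e c) (f : FF K) : DD e (app c f) = if e = c then f else 0 := by
  split_ifs with h
  · exact wext_apply (DD e ∘ₗ app c) LinearMap.id (by intro l; simp [DD, app, h]) f
  · exact wext_apply (DD e ∘ₗ app c) 0 (by intro l; simp [DD, app, Ne.symm h]) f
theorem DD_pre (e c) (f : FF K) :
    DD e (pre c f) = pre c (DD e f) + (if e = c then eps f else 0) • wd K [] := by
  have := wext_apply (DD e ∘ₗ pre c) (pre c ∘ₗ DD e + (if e = c then (1:K) else 0) •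
      (LinearMap.toSpanSingleton K _ (wd K []) ∘ₗ eps)) ?_ f
  · simp at this; rw [this]; split_ifs <;> simp
  intro l
  rcases List.eq_nil_or_concat l with rfl | ⟨l, a, rfl⟩
  · have : [c] = [] ++ [c] := rfl
    simp [pre_wd]
    rw [this, ← app_wd, DD_app]; split_ifs <;> simp
  · simp only [List.concat_eq_append]
    have h1 : eps (app a (wd K l)) = 0 := by simp
    have h2 : pre c (app a (wd K l)) = app a (pre c (wd K l)) := by simp [app_wd, pre_wd]
    simp only [LinearMap.comp_apply, LinearMap.add_apply, LinearMap.smul_apply,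
      ← app_wd, h1, h2, DD_app]
    split_ifs <;> simp [pre_wd]

theorem decomp (f : FF K) : f = eps f • wd K [] + ∑ c, app c (DD c f) := by
  have := wext_apply LinearMap.id (LinearMap.toSpanSingleton K _ (wd K []) ∘ₗ eps
    + ∑ c, app c ∘ₗ DD c) ?_ f
  · simpa using this
  intro l
  rcases List.eq_nil_or_concat l with rfl | ⟨l, a, rfl⟩
  · simp
  · simp only [List.concat_eq_append, ← app_wd]
    fin_cases a <;> simp

theorem FFext {f g : FF K} (h : eps f = eps g) (h2 : ∀ c, DD c f = DD c g) : f = g := by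
  rw [decomp f, decomp g, h]; simp [h2]

theorem sumw_append (a b) : sumw (K := K) (a ++ b) = sumw a + sumw b := by simp [sumw]
theorem sumw_map_cons (a c) : sumw (K := K) (a.map fun w => c :: w) = pre c (sumw a) := by
  simp [sumw, map_list_sum, Function.comp_def, pre_wd]
theorem sumw_map_app (a c) : sumw (K := K) (a.map fun w => w ++ [c]) = app c (sumw a) := by
  simp [sumw, map_list_sum, Function.comp_def, app_wd]

theorem sh_wd (u v) : sh (wd K u) (wd K v) = sumw (shuffles u v) := by simp [sh]
@[simp] theorem sh_one_left (f : FF K) : sh (wd K []) f = f :=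
  wext_apply (sh (wd K [])) LinearMap.id (by intro l; simp [sh_wd, shuffles, sumw]) f
@[simp] theorem sh_one_right (f : FF K) : sh f (wd K []) = f :=
  wext_apply (sh.flip (wd K [])) LinearMap.id
    (by intro l; cases l <;> simp [sh_wd, shuffles, sumw]) f
theorem wext2 {M : Type} [AddCommGroup M] [Module K M] {f g : FF K →ₗ[K] FF K →ₗ[K] M}
    (h : ∀ l m, f (wd K l) (wd K m) = g (wd K l) (wd K m)) (a b : FF K) : f a b = g a b := by
  rw [show f = g from wext fun l => wext fun m => h l m]
theorem sh_pre (a b) (f g : FF K) :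
    sh (pre a f) (pre b g) = pre a (sh f (pre b g)) + pre b (sh (pre a f) g) := by
  have := wext2 (f := sh.compl₁₂ (pre a) (pre b))
    (g := (sh.compl₁₂ LinearMap.id (pre b)).compr₂ (pre a)
      + (sh.compl₁₂ (pre a) LinearMap.id).compr₂ (pre b)) ?_ f g
  · simpa using this
  · intro l m
    simp [pre_wd, sh_wd, shuffles, sumw_append, sumw_map_cons]

theorem eps_sh (f g : FF K) : eps (sh f g) = eps f * eps g := by
  have := wext2 (f := sh.compr₂ eps) (g := (LinearMap.mul K K).compl₁₂ eps eps) ?_ f g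
  · simpa using this
  · intro l m
    rcases l with _ | ⟨a, l⟩
    · simp
    rcases m with _ | ⟨b, m⟩
    · simp
    simp [← pre_wd, sh_pre]

theorem DD_sh_wd (e) : ∀ (n : ℕ) (l m : List (Fin 2)), l.length + m.length ≤ n →
    DD e (sh (wd K l) (wd K m)) = sh (DD e (wd K l)) (wd K m) + sh (wd K l) (DD e (wd K m)) := by
  intro n
  induction n with
  | zero =>
    intro l m h
    have h1 : l = [] := List.length_eq_zero_iff.1 (by omega)
    simp [h1]
  | succ n ih =>
    intro l m h
    rcases l with _ | ⟨a, l⟩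
    · simp
    rcases m with _ | ⟨b, m⟩
    · simp
    have i1 := ih l (b :: m) (by simp at h ⊢; omega)
    have i2 := ih (a :: l) m (by simp at h ⊢; omega)
    simp only [← pre_wd] at i1 i2 ⊢
    simp only [sh_pre, map_add, DD_pre, i1, i2, eps_sh, eps_pre, LinearMap.add_apply,
      map_smul, LinearMap.smul_apply, sh_one_left, sh_one_right, mul_zero, zero_mul, ite_self,
      zero_smul, add_zero]
    abel

theorem DD_sh (e) (f g : FF K) : DD e (sh f g) = sh (DD e f) g + sh f (DD e g) := by
  have := wext2 (f := sh.compr₂ (DD e)) (g := sh.compl₁₂ (DD e) LinearMap.id +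
    sh.compl₁₂ LinearMap.id (DD e)) ?_ f g
  · simpa using this
  · intro l m
    simpa using DD_sh_wd e _ l m le_rfl

/-- filtration by length -/
noncomputable def Nl (K : Type) [Field K] : ℕ → Submodule K (FF K)
  | 0 => ⊥
  | n + 1 => ⨅ c, (Nl K n).comap (DD c)

theorem mem_Nl_zero {f : FF K} : f ∈ Nl K 0 ↔ f = 0 := by simp [Nl]
theorem mem_Nl_succ {n} {f : FF K} : f ∈ Nl K (n+1) ↔ ∀ c, DD c f ∈ Nl K n := by
  simp only [Nl, Submodule.mem_iInf, Submodule.mem_comap]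
theorem Nl_succ_le (n) : Nl K n ≤ Nl K (n+1) := by
  induction n with
  | zero => intro f hf; rw [mem_Nl_zero.1 hf]; exact zero_mem _
  | succ n ih => intro f hf; rw [mem_Nl_succ] at hf ⊢; exact fun c => ih (hf c)
theorem Nl_mono : Monotone (Nl K) := monotone_nat_of_le_succ Nl_succ_le
theorem wd_mem_Nl (l : List (Fin 2)) : wd K l ∈ Nl K (l.length + 1) := by
  induction l using List.reverseRecOn with
  | nil => rw [mem_Nl_succ]; simp
  | append_singleton l a ih =>
    rw [mem_Nl_succ, ← app_wd]
    intro c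
    simp only [DD_app, List.length_append, List.length_singleton]
    split_ifs
    · exact ih
    · exact zero_mem _
theorem exists_Nl (f : FF K) : ∃ n, f ∈ Nl K n := by
  induction f using Finsupp.induction_linear with
  | zero => exact ⟨0, zero_mem _⟩
  | add f g hf hg =>
    obtain ⟨n, hn⟩ := hf
    obtain ⟨m, hm⟩ := hg
    exact ⟨max n m, add_mem (Nl_mono (le_max_left _ _) hn) (Nl_mono (le_max_right _ _) hm)⟩
  | single a b =>
    refine ⟨a.length + 1, ?_⟩
    have := Submodule.smul_mem _ b (wd_mem_Nl (K := K) a)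
    simpa [wd] using this

theorem sh_comm_aux (n) : ∀ f ∈ Nl K n, ∀ g, sh f g = sh g f := by
  induction n with
  | zero => intro f hf g; rw [mem_Nl_zero.1 hf]; simp
  | succ n ih =>
    intro f hf g
    obtain ⟨m, hm⟩ := exists_Nl g
    induction m generalizing g with
    | zero => rw [mem_Nl_zero.1 hm]; simp
    | succ m ihm =>
      rw [mem_Nl_succ] at hf hm
      apply FFext
      · rw [eps_sh, eps_sh, mul_comm]
      · intro c
        rw [DD_sh, DD_sh, ih _ (hf c), ihm _ (hm c), add_comm]
theorem sh_comm (f g : FF K) : sh f g = sh g f := by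
  obtain ⟨n, hn⟩ := exists_Nl f
  exact sh_comm_aux n f hn g

theorem sh_assoc (f g h : FF K) : sh (sh f g) h = sh f (sh g h) := by
  obtain ⟨n, hn⟩ := exists_Nl f
  induction n generalizing f g h with
  | zero => rw [mem_Nl_zero.1 hn]; simp
  | succ n ih =>
    obtain ⟨m, hm⟩ := exists_Nl g
    induction m generalizing g h with
    | zero => rw [mem_Nl_zero.1 hm]; simp
    | succ m ihm =>
      obtain ⟨k, hk⟩ := exists_Nl h
      induction k generalizing h with
      | zero => rw [mem_Nl_zero.1 hk]; simp
      | succ k ihk =>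
        rw [mem_Nl_succ] at hn hm hk
        apply FFext
        · simp only [eps_sh, mul_assoc]
        · intro c
          simp only [DD_sh, map_add, LinearMap.add_apply]
          rw [ih _ _ _ (hn c), ihm _ _ (hm c), ihk _ (hk c), add_assoc]

/-- Zinbiel product on `FF`. -/
noncomputable def ZZ : FF K →ₗ[K] FF K →ₗ[K] FF K :=
  ∑ c, (sh.compl₁₂ LinearMap.id (DD c)).compr₂ (app c)
theorem ZZ_apply (f g : FF K) : ZZ f g = ∑ c, app c (sh f (DD c g)) := by
  simp [ZZ]
@[simp] theorem eps_ZZ (f g : FF K) : eps (ZZ f g) = 0 := by simp [ZZ_apply]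
@[simp] theorem DD_ZZ (c) (f g : FF K) : DD c (ZZ f g) = sh f (DD c g) := by
  fin_cases c <;> simp [ZZ_apply]
theorem ZZ_zinbiel (f g h : FF K) (hf : eps f = 0) :
    ZZ f (ZZ g h) = ZZ (ZZ f g + ZZ g f) h := by
  have key : ZZ f g + ZZ g f = sh f g := by
    apply FFext
    · simp [eps_sh, hf]
    · intro c
      simp only [map_add, DD_ZZ, DD_sh]
      rw [sh_comm g, add_comm]
  rw [key]
  apply FFext
  · simp
  · intro c; simp only [DD_ZZ, sh_assoc]

noncomputable def LL (c : Fin 2) : FF K →ₗ[K] FF K := sh (wd K [c])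
@[simp] theorem eps_LL (c) (f : FF K) : eps (LL c f) = 0 := by simp [LL, eps_sh]
theorem DD_letter (e c) : DD e (wd K [c]) = if e = c then wd K [] else 0 := by
  have : wd K [c] = app c (wd K []) := by simp [app_wd]
  rw [this, DD_app]
theorem DD_LL (e c) (f : FF K) : DD e (LL c f) = (if e = c then f else 0) + LL c (DD e f) := by
  rw [LL, DD_sh, DD_letter]; split_ifs <;> simp
theorem LL_comm (e c) (f : FF K) : LL e (LL c f) = LL c (LL e f) := by
  simp only [LL, ← sh_assoc]; rw [sh_comm (wd K [e])]
theorem LL_app (e c) (f : FF K) : LL e (app c f) = app e (app c f) + app c (LL e f) := by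
  apply FFext
  · simp
  · intro d
    simp only [DD_LL, DD_app, map_add]
    split_ifs <;> simp

noncomputable def BB : ℕ → FF K →ₗ[K] FF K
  | 0 => LinearMap.id
  | n + 1 => ∑ c, LL c ∘ₗ BB n ∘ₗ DD c
noncomputable def B1 : FF K →ₗ[K] FF K := ∑ c, LL c ∘ₗ DD c

theorem B1_apply (f : FF K) : B1 f = LL 0 (DD 0 f) + LL 1 (DD 1 f) := by simp [B1]
theorem BB_succ (n) (f : FF K) : BB (n+1) f = LL 0 (BB n (DD 0 f)) + LL 1 (BB n (DD 1 f)) := by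
  simp [BB]
theorem B1_LL (c) (f : FF K) : B1 (LL c f) = LL c f + LL c (B1 f) := by
  fin_cases c <;> simp [B1_apply, DD_LL, LL_comm 1 0] <;> abel
theorem BB_vanish (n) : ∀ f ∈ Nl K n, BB n f = 0 := by
  induction n with
  | zero => intro f hf; rw [mem_Nl_zero.1 hf]; simp
  | succ n ih =>
    intro f hf
    rw [mem_Nl_succ] at hf
    simp [BB_succ, ih _ (hf _)]
theorem B1_BB (n : ℕ) (f : FF K) : B1 (BB n f) = BB (n+1) f + (n : K) • BB n f := by
  induction n generalizing f with
  | zero => simp [BB_succ, B1_apply, BB]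
  | succ n ih =>
    rw [BB_succ n, map_add, B1_LL, B1_LL, ih, ih, BB_succ (n+1)]
    push_cast
    simp only [map_add, map_smul, add_smul, one_smul, smul_add]
    abel
theorem B1_inj [CharZero K] (f : FF K) (h : f + B1 f = 0) : f = 0 := by
  have hB : B1 f = -f := by rw [← add_eq_zero_iff_eq_neg, add_comm]; exact h
  have key : ∀ n : ℕ, BB n f = ((-1)^n * (n.factorial : K)) • f := by
    intro n
    induction n with
    | zero => simp [BB]
    | succ n ih =>
      have := B1_BB n f
      rw [ih, map_smul, hB] at this
      rw [eq_sub_of_add_eq this.symm, Nat.factorial_succ, smul_smul, smul_neg, ← neg_smul, ← sub_smul]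
      congr 1
      push_cast; ring
  obtain ⟨n, hn⟩ := exists_Nl f
  have := key n
  rw [BB_vanish n f hn, eq_comm, smul_eq_zero] at this
  rcases this with h | h
  · exfalso
    simp [Nat.factorial_ne_zero] at h
  · exact h

noncomputable def Ew (K : Type) [Field K] (l : List (Fin 2)) : FF K :=
  l.foldl (fun f c => -(app c f + LL c f)) (wd K [])
noncomputable def EE : FF K →ₗ[K] FF K := wlin (Ew K)
theorem EE_nil : EE (wd K []) = wd K [] := by simp [EE, Ew]
theorem EE_app (c) (f : FF K) : EE (app c f) = -(app c (EE f) + LL c (EE f)) :=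
  wext_apply (EE ∘ₗ app c) (-(app c ∘ₗ EE + LL c ∘ₗ EE))
    (by intro l; simp [app_wd, EE, Ew]) f
theorem EE_inj [CharZero K] (f : FF K) (h : EE f = 0) : f = 0 := by
  obtain ⟨n, hn⟩ := exists_Nl f
  induction n generalizing f with
  | zero => exact mem_Nl_zero.1 hn
  | succ n ih =>
    rw [mem_Nl_succ] at hn
    let g := app 0 (EE (DD 0 f)) + app 1 (EE (DD 1 f))
    have hg : EE f = eps f • wd K [] - (g + B1 g) := by
      conv_lhs => rw [decomp f]
      simp [g, EE_nil, EE_app, B1_apply]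
      abel
    rw [h] at hg
    have h1 : eps f = 0 := by
      have := congrArg eps hg
      simpa [g, B1_apply] using this.symm
    have h2 : g = 0 := by
      apply B1_inj
      rw [h1, zero_smul, zero_sub, eq_comm, neg_eq_zero] at hg
      exact hg
    apply FFext
    · simpa using h1
    · intro c
      rw [map_zero]
      apply ih _ _ (hn c)
      have := congrArg (DD c) h2
      fin_cases c <;> simpa [g] using this

noncomputable def MM : FF K →ₗ[K] FF K := app 1 ∘ₗ app 0 - app 0 ∘ₗ app 1
theorem MM_apply (f : FF K) : MM f = app 1 (app 0 f) - app 0 (app 1 f) := rfl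
theorem MM_bracket (c) (f : FF K) :
    ZZ (MM f) (wd K [c]) - ZZ (wd K [c]) (MM f) = MM (-(app c f + LL c f)) := by
  have e : ∀ g : FF K, sh (wd K [c]) g = LL c g := fun _ => rfl
  fin_cases c <;> simp [ZZ_apply, MM_apply, DD_letter] <;> simp at e <;>
    simp [e, LL_app] <;> abel
end words
section zin
variable {K : Type} [Field K]

def wl (u : Word (Fin 2)) : List (Fin 2) := u.1
theorem wl_inj : Function.Injective wl := fun _ _ h => Subtype.ext h
noncomputable def iot : Zin K (Fin 2) →ₗ[K] FF K := Finsupp.lmapDomain K K wl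
theorem iot_inj : Function.Injective (iot (K := K)) :=
  Finsupp.mapDomain_injective wl_inj
theorem iot_single (u : Word (Fin 2)) (c : K) : iot (Finsupp.single u c) = c • wd K (wl u) := by
  have : iot (Finsupp.single u c) = Finsupp.single (wl u) c := Finsupp.mapDomain_single
  rw [this]; simp [wd]
theorem iot_letter (c : Fin 2) : iot (ofLetter (K := K) c) = wd K [c] :=
  (iot_single _ _).trans (one_smul _ _)
theorem eps_iot (f : Zin K (Fin 2)) : eps (iot f) = 0 := by
  induction f using Finsupp.induction_linear with
  | zero => simp
  | add f g hf hg => simp [hf, hg]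
  | single a b =>
    rw [iot_single]
    obtain ⟨l, hl⟩ := a
    cases l with
    | nil => exact absurd rfl hl
    | cons a l => simp [wl]

theorem iot_ofLists (ls : List (List (Fin 2))) (h : ∀ l ∈ ls, l ≠ []) :
    iot (ofLists (K := K) ls) = sumw ls := by
  induction ls with
  | nil => simp [ofLists, sumw]
  | cons l ls ih =>
    have ih := ih fun m hm => h m (List.mem_cons_of_mem _ hm)
    have hl : iot (ofList (K := K) l) = wd K l := by
      cases l with
      | nil => exact absurd rfl (h [] (by simp))
      | cons a l => exact (iot_single _ _).trans (one_smul _ _)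
    simp only [ofLists, sumw, List.map_cons, List.sum_cons, map_add] at ih ⊢
    rw [ih, hl]

theorem iot_zmul (f g : Zin K (Fin 2)) : iot (zmul f g) = ZZ (iot f) (iot g) := by
  have hf : iot f = f.sum fun u c => c • wd K (wl u) := by
    conv_lhs => rw [← Finsupp.sum_single f]
    rw [map_finsuppSum]; simp only [iot_single]
  have hg : iot g = g.sum fun u c => c • wd K (wl u) := by
    conv_lhs => rw [← Finsupp.sum_single g]
    rw [map_finsuppSum]; simp only [iot_single]
  rw [hf, hg, zmul, map_finsuppSum]
  simp only [Finsupp.sum, map_sum, LinearMap.sum_apply]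
  rw [Finset.sum_comm]
  refine Finset.sum_congr rfl fun w _ => Finset.sum_congr rfl fun u _ => ?_
  simp only [map_smul, LinearMap.smul_apply, smul_smul]
  rw [mul_comm (g w)]
  congr 1
  rw [iot_ofLists _ (by simp), sumw_map_app, ← sh_wd]
  obtain ⟨w, hw⟩ := w
  change app (w.getLast hw) (sh (wd K (wl u)) (wd K w.dropLast)) = ZZ (wd K (wl u)) (wd K w)
  rcases List.eq_nil_or_concat w with rfl | ⟨w, a, rfl⟩
  · exact absurd rfl hw
  · simp only [List.concat_eq_append, List.dropLast_concat, List.getLast_append_singleton]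
    rw [← app_wd a w]
    fin_cases a <;> simp [ZZ_apply]

theorem iot_zbracket (f g : Zin K (Fin 2)) :
    iot (zbracket f g) = ZZ (iot f) (iot g) - ZZ (iot g) (iot f) := by
  rw [zbracket, map_sub, iot_zmul, iot_zmul]

/-- type synonym carrying the bracket -/
def ZT (K : Type) [Field K] : Type := Zin K (Fin 2)
noncomputable instance : AddCommGroup (ZT K) := inferInstanceAs (AddCommGroup (Zin K (Fin 2)))
noncomputable instance : Module K (ZT K) := inferInstanceAs (Module K (Zin K (Fin 2)))
noncomputable def iotT : ZT K →ₗ[K] FF K := iot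
theorem iotT_inj : Function.Injective (iotT (K := K)) := iot_inj
noncomputable instance : Mul (ZT K) := ⟨fun f g => zbracket (K := K) (X := Fin 2) f g⟩
theorem iotT_mul (f g : ZT K) : iotT (f * g) = ZZ (iotT f) (iotT g) - ZZ (iotT g) (iotT f) :=
  iot_zbracket f g
noncomputable instance : NonUnitalNonAssocRing (ZT K) :=
  { (inferInstance : AddCommGroup (ZT K)), (inferInstance : Mul (ZT K)) with
    left_distrib := fun a b c => by apply iotT_inj; simp [iotT_mul]; abel
    right_distrib := fun a b c => by apply iotT_inj; simp [iotT_mul]; abel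
    zero_mul := fun a => by apply iotT_inj; simp [iotT_mul]
    mul_zero := fun a => by apply iotT_inj; simp [iotT_mul] }
instance : SMulCommClass K (ZT K) (ZT K) :=
  ⟨fun c a b => by apply iotT_inj; simp [iotT_mul, smul_sub]⟩
instance : IsScalarTower K (ZT K) (ZT K) :=
  ⟨fun c a b => by apply iotT_inj; simp [iotT_mul, smul_sub]⟩

noncomputable def ZTort (K : Type) [Field K] : TortkaraAlgebra K where
  carrier := ZT K
  anticomm a b := by apply iotT_inj; simp [iotT_mul]
  tortkara a b c := by
    apply iotT_inj
    have ha : eps (iotT a) = 0 := eps_iot a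
    have hb : eps (iotT b) = 0 := eps_iot b
    have hc : eps (iotT c) = 0 := eps_iot c
    simp only [iotT_mul, map_add]
    generalize iotT a = a at *
    generalize iotT b = b at *
    generalize iotT c = c at *
    simp only [map_add, map_sub, LinearMap.add_apply, LinearMap.sub_apply]
    simp only [ZZ_zinbiel, ha, hb, hc, eps_ZZ, map_add, LinearMap.add_apply]
    abel
end zin

theorem free_gen {K : Type} [Field K] (T : TortkaraAlgebra K) (x y : T.carrier)
    (hfree : ∀ (S : TortkaraAlgebra K) (s t : S.carrier),
      ∃! φ : T.carrier →ₙₐ[K] S.carrier, φ x = s ∧ φ y = t)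
    (P : NonUnitalSubalgebra K T.carrier) (hx : x ∈ P) (hy : y ∈ P) (t : T.carrier) : t ∈ P := by
  let S : TortkaraAlgebra K :=
    { carrier := P
      anticomm := fun a b => Subtype.ext (T.anticomm a b)
      tortkara := fun a b c => Subtype.ext (T.tortkara a b c) }
  obtain ⟨φ, ⟨h1, h2⟩, -⟩ := hfree S ⟨x, hx⟩ ⟨y, hy⟩
  let i : S.carrier →ₙₐ[K] T.carrier := NonUnitalSubalgebraClass.subtype P
  obtain ⟨ψ, -, hu⟩ := hfree T x y
  have e1 := hu (i.comp φ) ⟨by simp [h1]; rfl, by simp [h2]; rfl⟩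
  have e2 := hu (NonUnitalAlgHom.id K T.carrier) ⟨rfl, rfl⟩
  have : (i.comp φ) t = t := by rw [e1, ← e2]; rfl
  rw [← this]
  exact (φ t).2

/-- The free Tortkara algebra on two generators is special: for any Tortkara algebra `T`
free on two generators `x, y` (i.e. satisfying the universal property), the natural
homomorphism `T → ST({x,y})` sending `x ↦ x`, `y ↦ y` is an isomorphism of algebras;
in particular `T` embeds into the minus-algebra of a Zinbiel algebra. -/
theorem free_tortkara_two_generators_special (K : Type) [Field K] [CharZero K]
    (T : TortkaraAlgebra K) (x y : T.carrier)
    (hfree : ∀ (S : TortkaraAlgebra K) (s t : S.carrier),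
      ∃! φ : T.carrier →ₙₐ[K] S.carrier, φ x = s ∧ φ y = t) :
    ∃ φ : T.carrier →ₗ[K] Zin K (Fin 2),
      φ x = ofLetter 0 ∧ φ y = ofLetter 1 ∧
      (∀ s t : T.carrier, φ (s * t) = zbracket (φ s) (φ t)) ∧
      Function.Injective φ ∧
      LinearMap.range φ = Submodule.span K {f : Zin K (Fin 2) | InST f} := by
  obtain ⟨φ, ⟨hφx, hφy⟩, -⟩ := hfree (ZTort K) (ofLetter (K := K) (0 : Fin 2))
    (ofLetter (K := K) (1 : Fin 2))
  have gen := free_gen T x y hfree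
  let φl : T.carrier →ₗ[K] Zin K (Fin 2) :=
    { toFun := fun t => φ t
      map_add' := fun a b => map_add φ a b
      map_smul' := fun c a => map_smul φ c a }
  have hmul : ∀ s t : T.carrier, φl (s * t) = zbracket (φl s) (φl t) := fun s t => map_mul φ s t
  have hx : φl x = ofLetter 0 := hφx
  have hy : φl y = ofLetter 1 := hφy
  refine ⟨φl, hx, hy, hmul, ?_, ?_⟩
  · -- injectivity
    have two : ∀ a : T.carrier, a = -a → a = 0 := by
      intro a ha
      have h2 : (2 : K) • a = 0 := by
        rw [two_smul]; nth_rewrite 1 [ha]; simp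
      exact (smul_eq_zero.1 h2).resolve_left two_ne_zero
    have hsq : ∀ a : T.carrier, a * a = 0 := fun a => two _ (T.anticomm a a)
    let xy : Fin 2 → T.carrier := ![x, y]
    let Ψ : FF K →ₗ[K] T.carrier := wlin fun l => l.foldl (fun a c => a * xy c) (x * y)
    have hΨ0 : Ψ (wd K []) = x * y := by simp [Ψ]
    have hΨ : ∀ c f, Ψ (app c f) = Ψ f * xy c := fun c f =>
      wext_apply (Ψ ∘ₗ app c) (LinearMap.mulRight K (xy c) ∘ₗ Ψ)
        (by intro l; simp [app_wd, Ψ]) f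
    let Q : Submodule K T.carrier := Submodule.span K {x, y} ⊔ LinearMap.range Ψ
    have hQx : x ∈ Q := Submodule.mem_sup_left (Submodule.subset_span (by simp))
    have hQy : y ∈ Q := Submodule.mem_sup_left (Submodule.subset_span (by simp))
    have hQΨ : ∀ f, Ψ f ∈ Q := fun f => Submodule.mem_sup_right ⟨f, rfl⟩
    have hQ : ∀ c, ∀ q ∈ Q, q * xy c ∈ Q := by
      intro c q hq
      obtain ⟨a, ha, b, ⟨f, rfl⟩, rfl⟩ := Submodule.mem_sup.1 hq
      obtain ⟨α, β, rfl⟩ := Submodule.mem_span_pair.1 ha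
      have hxy : x * y ∈ Q := hΨ0 ▸ hQΨ _
      have hyx : y * x ∈ Q := by rw [T.anticomm]; exact neg_mem hxy
      rw [add_mul, ← hΨ, add_mul, smul_mul_assoc, smul_mul_assoc]
      refine add_mem (add_mem (Submodule.smul_mem _ _ ?_) (Submodule.smul_mem _ _ ?_)) (hQΨ _)
      · fin_cases c
        · simp [xy, hsq]
        · exact hxy
      · fin_cases c
        · exact hyx
        · simp [xy, hsq]
    have hV : ∀ n, VV K x y n ≤ Q := by
      intro n
      induction n with
      | zero => exact le_sup_left
      | succ n ih =>
        intro u hu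
        obtain ⟨a, ha, b, hb, rfl⟩ := mem_VV_succ.1 hu
        exact add_mem (hQ 0 a (ih ha)) (hQ 1 b (ih hb))
    let P : NonUnitalSubalgebra K T.carrier :=
      { (⨆ n, VV K x y n : Submodule K T.carrier) with
        mul_mem' := by
          intro a b ha hb
          change a ∈ (⨆ n, VV K x y n) at ha
          change b ∈ (⨆ n, VV K x y n) at hb
          change a * b ∈ (⨆ n, VV K x y n)
          induction ha using Submodule.iSup_induction' with
          | zero => rw [zero_mul]; exact zero_mem _
          | add p q _ _ hp hq => rw [add_mul]; exact add_mem hp hq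
          | mem i p hp =>
            induction hb using Submodule.iSup_induction' with
            | zero => rw [mul_zero]; exact zero_mem _
            | add p q _ _ hp hq => rw [mul_add]; exact add_mem hp hq
            | mem j q hq =>
              exact Submodule.mem_iSup_of_mem _
                (VV_mul T.anticomm T.tortkara two x y _ i j rfl p hp q hq) }
    have hP : ∀ t, t ∈ Q := by
      intro t
      have : t ∈ (⨆ n, VV K x y n) := gen P (Submodule.mem_iSup_of_mem 0 VV_x)
        (Submodule.mem_iSup_of_mem 0 VV_y) t
      exact (iSup_le hV) this
    have hιxy : ∀ c, iot (φl (xy c)) = wd K [c] := by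
      intro c
      fin_cases c
      · simp [xy, hx, iot_letter]
      · simp [xy, hy, iot_letter]
    have hιΨ : ∀ f, iot (φl (Ψ f)) = MM (EE f) := by
      apply wext_apply (iot ∘ₗ φl ∘ₗ Ψ) (MM ∘ₗ EE)
      intro l
      simp only [LinearMap.comp_apply]
      induction l using List.reverseRecOn with
      | nil =>
        rw [hΨ0, EE_nil, hmul, iot_zbracket, hx, hy, iot_letter, iot_letter, ZZ_apply, ZZ_apply]
        simp [DD_letter, MM_apply, app_wd]
      | append_singleton l a ih =>
        rw [← app_wd, hΨ, hmul, iot_zbracket, ih, hιxy, MM_bracket, EE_app]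
    rw [injective_iff_map_eq_zero]
    intro t ht
    obtain ⟨a, ha, b, ⟨f, rfl⟩, rfl⟩ := Submodule.mem_sup.1 (hP t)
    obtain ⟨α, β, rfl⟩ := Submodule.mem_span_pair.1 ha
    have h0 : α • wd K [0] + β • wd K [1] + MM (EE f) = 0 := by
      have := congrArg iot ht
      simpa only [map_add, map_smul, hιΨ, hx, hy, iot_letter, map_zero] using this
    have hα : α = 0 := by
      have := congrArg (fun g => eps (DD 0 g)) h0
      simpa [DD_letter, MM_apply] using this
    have hβ : β = 0 := by
      have := congrArg (fun g => eps (DD 1 g)) h0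
      simpa [DD_letter, MM_apply] using this
    have hE : EE f = 0 := by
      have := congrArg (fun g => DD 0 (DD 1 g)) h0
      simpa [hα, hβ, MM_apply] using this
    simp [hα, hβ, EE_inj f hE]
  · apply le_antisymm
    · rintro _ ⟨t, rfl⟩
      let P : NonUnitalSubalgebra K T.carrier :=
        { carrier := {t | InST (φl t)}
          add_mem' := fun {a b} ha hb => by
            change InST (φl (a + b)); rw [map_add]; exact InST.add ha hb
          zero_mem' := by change InST (φl 0); rw [map_zero]; exact InST.zero
          smul_mem' := fun c a ha => by
            change InST (φl (c • a)); rw [map_smul]; exact InST.smul c ha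
          mul_mem' := fun {a b} ha hb => by
            change InST (φl (a * b)); rw [hmul]; exact InST.bracket ha hb }
      have : InST (φl t) := gen P (by change InST (φl x); rw [hx]; exact InST.letter 0)
        (by change InST (φl y); rw [hy]; exact InST.letter 1) t
      exact Submodule.subset_span this
    · rw [Submodule.span_le]
      intro f hf
      change f ∈ LinearMap.range φl
      have hf : InST f := hf
      induction hf with
      | letter c =>
        fin_cases c
        · exact ⟨x, hx⟩
        · exact ⟨y, hy⟩
      | zero => exact zero_mem _
      | add _ _ h1 h2 => exact add_mem (h1 ‹_›) (h2 ‹_›)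
      | smul c _ h => exact Submodule.smul_mem _ c (h ‹_›)
      | bracket _ _ h1 h2 =>
        obtain ⟨a, rfl⟩ := h1 ‹_›
        obtain ⟨b, rfl⟩ := h2 ‹_›
        exact ⟨a * b, hmul a b⟩
end
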